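/- arXiv:2504.21430 — 10 statements merged into one kernel-verified Lean document; each statement's English description precedes it below -/
import Mathlib

section
/- Let d ≥ 1, β ∈ [1,2), and let b : ℝ^d → ℝ^d satisfy Assumption (A) with parameter θ ≥ 0. Then there exist constants c > 0 and C > 0 such that for every x ∈ ℝ^d, ⟨b(x), ∇V_β(x)⟩ ≤ −c V_β(x)^{1+θ/β} + C, where ∇V_β(x) = β(1+|x|²)^{(β−2)/2} x. -/
open scoped RealInnerProductSpace

/-- If `b` satisfies Assumption (A) with parameter `θ ≥ 0` and `β ∈ [1,2)`, then there are
constants `c, C > 0` with `⟨b(x), ∇V_β(x)⟩ ≤ -c V_β(x)^{1+θ/β} + C` for all `x`, where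
`V_β(x) = (1+|x|²)^{β/2}` and `∇V_β(x) = β(1+|x|²)^{(β-2)/2} x`. -/
theorem stmt2 (d : ℕ) (hd : 1 ≤ d) (β θ K₁ K₂ L : ℝ)
    (hβ1 : 1 ≤ β) (hβ2 : β < 2) (hθ : 0 ≤ θ) (hK₁ : 0 < K₁) (hK₂ : 0 < K₂) (hL : 0 < L)
    (b : EuclideanSpace ℝ (Fin d) → EuclideanSpace ℝ (Fin d))
    (hb : Differentiable ℝ b)
    (hb1 : ∀ x y : EuclideanSpace ℝ (Fin d), ‖x - y‖ ≤ L →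
      ⟪b x - b y, x - y⟫ ≤ K₁ * ‖x - y‖ ^ 2)
    (hb2 : ∀ x y : EuclideanSpace ℝ (Fin d), L < ‖x - y‖ →
      ⟪b x - b y, x - y⟫ ≤ -K₂ * ‖x - y‖ ^ (2 + θ)) :
    ∃ c C : ℝ, 0 < c ∧ 0 < C ∧ ∀ x : EuclideanSpace ℝ (Fin d),
      ⟪b x, (β * (1 + ‖x‖ ^ 2) ^ ((β - 2) / 2)) • x⟫ ≤
        -c * ((1 + ‖x‖ ^ 2) ^ (β / 2)) ^ (1 + θ / β) + C := by
  have hβ0 : 0 < β := by linarith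
  set B : ℝ := ‖b 0‖ with hB
  have hB0 : 0 ≤ B := norm_nonneg _
  set c : ℝ := β * (K₂ / 2 * (1 / 2) ^ (1 + θ / 2)) with hc
  have hc0 : 0 < c := by positivity
  set R : ℝ := L + 1 + 2 * B / K₂ with hR
  have hR0 : 0 < R := by positivity
  have hsplit (x : EuclideanSpace ℝ (Fin d)) : ⟪b x, x⟫ ≤ ⟪b x - b 0, x - 0⟫ + B * ‖x‖ := by
    have h := real_inner_le_norm (b 0) x
    rw [sub_zero, inner_sub_left]
    linarith
  refine ⟨c, β * (K₁ * R ^ 2 + B * R) + c * (1 + R ^ 2) ^ ((β + θ) / 2), hc0, by positivity, ?_⟩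
  intro x
  have hr0 : 0 ≤ ‖x‖ := norm_nonneg x
  have hs1 : 1 ≤ 1 + ‖x‖ ^ 2 := by nlinarith
  have hs0 : 0 < 1 + ‖x‖ ^ 2 := by linarith
  have hexp : ((1 + ‖x‖ ^ 2) ^ (β / 2)) ^ (1 + θ / β) = (1 + ‖x‖ ^ 2) ^ ((β + θ) / 2) := by
    rw [← Real.rpow_mul hs0.le]
    congr 1
    field_simp
  rw [hexp, real_inner_smul_right]
  rcases le_or_gt ‖x‖ R with hxR | hxR
  · have hinner : ⟪b x, x⟫ ≤ K₁ * R ^ 2 + B * R := by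
      have hK : ⟪b x - b 0, x - 0⟫ ≤ K₁ * ‖x‖ ^ 2 := by
        rcases le_or_gt ‖x - 0‖ L with hxL | hxL
        · simpa using hb1 x 0 hxL
        · have h := hb2 x 0 hxL
          have h1 : 0 ≤ K₂ * ‖x - 0‖ ^ (2 + θ) := by positivity
          have h2 : 0 ≤ K₁ * ‖x‖ ^ 2 := by positivity
          linarith
      have h1 : K₁ * ‖x‖ ^ 2 ≤ K₁ * R ^ 2 := by gcongr
      have h2 : B * ‖x‖ ≤ B * R := by gcongr
      linarith [hsplit x]
    have hweight : (1 + ‖x‖ ^ 2) ^ ((β - 2) / 2) ≤ 1 :=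
      Real.rpow_le_one_of_one_le_of_nonpos hs1 (by linarith)
    have hleft : β * (1 + ‖x‖ ^ 2) ^ ((β - 2) / 2) * ⟪b x, x⟫ ≤ β * (K₁ * R ^ 2 + B * R) := by
      calc β * (1 + ‖x‖ ^ 2) ^ ((β - 2) / 2) * ⟪b x, x⟫
          ≤ β * (1 + ‖x‖ ^ 2) ^ ((β - 2) / 2) * (K₁ * R ^ 2 + B * R) := by gcongr
        _ ≤ β * 1 * (K₁ * R ^ 2 + B * R) := by gcongr
        _ = β * (K₁ * R ^ 2 + B * R) := by ring
    have hright : c * (1 + ‖x‖ ^ 2) ^ ((β + θ) / 2) ≤ c * (1 + R ^ 2) ^ ((β + θ) / 2) := by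
      gcongr
    linarith
  · have hBK : 0 ≤ 2 * B / K₂ := by positivity
    have hr1 : 1 ≤ ‖x‖ := by linarith
    have hBr : B ≤ K₂ / 2 * ‖x‖ := by
      have h : 2 * B / K₂ ≤ ‖x‖ := by linarith
      rw [div_le_iff₀ hK₂] at h
      linarith
    have hpow : ‖x‖ ^ 2 ≤ ‖x‖ ^ (2 + θ) := by
      rw [← Real.rpow_natCast]
      exact Real.rpow_le_rpow_of_exponent_le hr1 (by push_cast; linarith)
    have hfar : ⟪b x - b 0, x - 0⟫ ≤ -K₂ * ‖x‖ ^ (2 + θ) := by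
      simpa using hb2 x 0 (by rw [sub_zero]; linarith)
    have hinner : ⟪b x, x⟫ ≤ -(K₂ / 2 * ‖x‖ ^ (2 + θ)) := by
      have h1 : B * ‖x‖ ≤ K₂ / 2 * ‖x‖ * ‖x‖ := by gcongr
      have h2 : K₂ / 2 * ‖x‖ ^ 2 ≤ K₂ / 2 * ‖x‖ ^ (2 + θ) := by gcongr
      linarith [hsplit x]
    have hlower : (1 / 2) ^ (1 + θ / 2) * (1 + ‖x‖ ^ 2) ^ (1 + θ / 2) ≤ ‖x‖ ^ (2 + θ) := by
      have h : ‖x‖ ^ (2 + θ) = (‖x‖ ^ 2) ^ (1 + θ / 2) := by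
        rw [← Real.rpow_natCast, ← Real.rpow_mul hr0]
        congr 1
        push_cast
        ring
      rw [h, ← Real.mul_rpow (by norm_num) hs0.le]
      exact Real.rpow_le_rpow (by positivity) (by nlinarith) (by positivity)
    have hmul : (1 + ‖x‖ ^ 2) ^ ((β + θ) / 2) =
        (1 + ‖x‖ ^ 2) ^ ((β - 2) / 2) * (1 + ‖x‖ ^ 2) ^ (1 + θ / 2) := by
      rw [← Real.rpow_add hs0]
      congr 1
      ring
    have hmain : β * (1 + ‖x‖ ^ 2) ^ ((β - 2) / 2) * ⟪b x, x⟫ ≤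
        -c * (1 + ‖x‖ ^ 2) ^ ((β + θ) / 2) := by
      calc β * (1 + ‖x‖ ^ 2) ^ ((β - 2) / 2) * ⟪b x, x⟫
          ≤ β * (1 + ‖x‖ ^ 2) ^ ((β - 2) / 2) *
              -(K₂ / 2 * ((1 / 2) ^ (1 + θ / 2) * (1 + ‖x‖ ^ 2) ^ (1 + θ / 2))) := by
            refine mul_le_mul_of_nonneg_left (hinner.trans (neg_le_neg ?_)) (by positivity)
            gcongr
        _ = -c * (1 + ‖x‖ ^ 2) ^ ((β + θ) / 2) := by
            rw [hmul, hc]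
            ring
    have hC : 0 ≤ β * (K₁ * R ^ 2 + B * R) + c * (1 + R ^ 2) ^ ((β + θ) / 2) := by positivity
    linarith
end

section
/- Let d ≥ 1, α ∈ (1,2), and β ∈ [1,2]. Then for every x ∈ ℝ^d the integral ∫_{0<|z|≤1} (V_β(x+z) − V_β(x) − ⟨∇V_β(x), z⟩) |z|^{−(α+d)} dz is absolutely convergent and satisfies ∫_{0<|z|≤1} (V_β(x+z) − V_β(x) − ⟨∇V_β(x), z⟩) |z|^{−(α+d)} dz ≤ β(3−β)√d σ_{d−1} / (2(2−α)). -/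
open MeasureTheory
open scoped RealInnerProductSpace

section Pointwise

variable {E : Type*} [NormedAddCommGroup E] [InnerProductSpace ℝ E]

/-- Concavity of `t ↦ t ^ (β / 2)` bounds the first-order Taylor remainder of
`x ↦ (1 + ‖x‖ ^ 2) ^ (β / 2)` from above. -/
lemma taylor_remainder_le {β : ℝ} (hβ0 : 0 ≤ β) (hβ2 : β ≤ 2) (x z : E) :
    (1 + ‖x + z‖ ^ 2) ^ (β / 2) - (1 + ‖x‖ ^ 2) ^ (β / 2) -
      ⟪(β * (1 + ‖x‖ ^ 2) ^ ((β - 2) / 2)) • x, z⟫ ≤ β / 2 * ‖z‖ ^ 2 := by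
  have hexp : ‖x + z‖ ^ 2 = ‖x‖ ^ 2 + 2 * ⟪x, z⟫ + ‖z‖ ^ 2 := norm_add_sq_real x z
  have ha1 : 1 ≤ 1 + ‖x‖ ^ 2 := by nlinarith [sq_nonneg ‖x‖]
  have hb : 0 ≤ 1 + ‖x + z‖ ^ 2 := by positivity
  rw [real_inner_smul_left]
  generalize ⟪x, z⟫ = w at *
  obtain ⟨a, hadef⟩ : ∃ a, a = 1 + ‖x‖ ^ 2 := ⟨_, rfl⟩
  rw [← hadef] at ha1 ⊢
  have ha : 0 < a := by linarith
  have key := rpow_one_add_le_one_add_mul_self (s := (1 + ‖x + z‖ ^ 2) / a - 1)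
    (by linarith [div_nonneg hb ha.le]) (p := β / 2) (by linarith) (by linarith)
  rw [add_sub_cancel, Real.div_rpow hb ha.le, div_le_iff₀ (Real.rpow_pos_of_pos ha _)] at key
  have hpow : a ^ (β / 2) = a ^ ((β - 2) / 2) * a := by
    rw [← Real.rpow_add_one ha.ne']
    congr 1
    ring
  have hle : a ^ ((β - 2) / 2) ≤ 1 := Real.rpow_le_one_of_one_le_of_nonpos ha1 (by linarith)
  have hfac : (1 + β / 2 * ((1 + ‖x + z‖ ^ 2) / a - 1)) * (a ^ ((β - 2) / 2) * a) =
      a ^ ((β - 2) / 2) * a + β / 2 * a ^ ((β - 2) / 2) * (1 + ‖x + z‖ ^ 2 - a) := by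
    field_simp
  rw [hpow, hfac] at key
  rw [hpow]
  have hmul := mul_le_mul_of_nonneg_left hle (show 0 ≤ β / 2 * ‖z‖ ^ 2 by positivity)
  have hsub : 1 + ‖x + z‖ ^ 2 - a = 2 * w + ‖z‖ ^ 2 := by linarith
  rw [hsub] at key
  linarith

lemma sq_rpow_half {t : ℝ} (ht : 0 < t) (p : ℝ) : (t ^ 2) ^ (p / 2) = t ^ p := by
  rw [← Real.rpow_two, ← Real.rpow_mul ht.le, mul_div_cancel₀ p two_ne_zero]

/-- Convexity of `x ↦ (1 + ‖x‖ ^ 2) ^ (β / 2)` for `1 ≤ β`: its first-order Taylor remainder is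
nonnegative. -/
lemma taylor_remainder_nonneg {β : ℝ} (hβ1 : 1 ≤ β) (x z : E) :
    0 ≤ (1 + ‖x + z‖ ^ 2) ^ (β / 2) - (1 + ‖x‖ ^ 2) ^ (β / 2) -
      ⟪(β * (1 + ‖x‖ ^ 2) ^ ((β - 2) / 2)) • x, z⟫ := by
  obtain ⟨r, hr0, hr2⟩ : ∃ r : ℝ, 0 < r ∧ r ^ 2 = 1 + ‖x‖ ^ 2 :=
    ⟨√(1 + ‖x‖ ^ 2), Real.sqrt_pos.2 (by positivity), Real.sq_sqrt (by positivity)⟩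
  obtain ⟨s, hs0, hs2⟩ : ∃ s : ℝ, 0 < s ∧ s ^ 2 = 1 + ‖x + z‖ ^ 2 :=
    ⟨√(1 + ‖x + z‖ ^ 2), Real.sqrt_pos.2 (by positivity), Real.sq_sqrt (by positivity)⟩
  have hcs : 1 + ‖x‖ ^ 2 + ⟪x, z⟫ ≤ r * s := by
    have h := real_inner_le_norm x (x + z)
    rw [inner_add_right, real_inner_self_eq_norm_sq] at h
    have h' : 1 + ‖x‖ * ‖x + z‖ ≤ r * s := by
      refine le_of_sq_le_sq ?_ (by positivity)
      rw [mul_pow, hr2, hs2]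
      nlinarith [sq_nonneg (‖x‖ - ‖x + z‖)]
    linarith
  have key := one_add_mul_self_le_rpow_one_add (s := s / r - 1)
    (by linarith [div_pos hs0 hr0]) hβ1
  rw [add_sub_cancel, Real.div_rpow hs0.le hr0.le, le_div_iff₀ (Real.rpow_pos_of_pos hr0 _)] at key
  have hpow : r ^ β = r ^ (β - 2) * r ^ 2 := by
    rw [← Real.rpow_natCast, ← Real.rpow_add hr0]
    congr 1
    push_cast
    ring
  have hfac : (1 + β * (s / r - 1)) * (r ^ (β - 2) * r ^ 2) =
      r ^ (β - 2) * r ^ 2 + β * r ^ (β - 2) * (r * s - r ^ 2) := by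
    field_simp
  rw [hpow, hfac] at key
  rw [real_inner_smul_left, ← hr2, ← hs2, sq_rpow_half hr0, sq_rpow_half hs0, sq_rpow_half hr0, hpow]
  have hmul := mul_le_mul_of_nonneg_left (show ⟪x, z⟫ ≤ r * s - r ^ 2 by linarith)
    (show 0 ≤ β * r ^ (β - 2) by positivity)
  linarith

end Pointwise

/-- The surface area of the unit sphere is the dimension times the volume of the unit ball. -/
lemma dim_mul_volume_real_unit_ball {d : ℕ} (hd : 1 ≤ d) :
    d * volume.real (Metric.ball (0 : EuclideanSpace ℝ (Fin d)) 1) =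
      2 * Real.pi ^ ((d : ℝ) / 2) / Real.Gamma ((d : ℝ) / 2) := by
  have : Nonempty (Fin d) := ⟨⟨0, hd⟩⟩
  have hd0 : (0 : ℝ) < d := by exact_mod_cast hd
  have hG : 0 < Real.Gamma ((d : ℝ) / 2) := Real.Gamma_pos_of_pos (by positivity)
  have hpi : √Real.pi ^ d = Real.pi ^ ((d : ℝ) / 2) := by
    rw [Real.sqrt_eq_rpow, ← Real.rpow_natCast, ← Real.rpow_mul Real.pi_pos.le]
    congr 1
    ring
  rw [Measure.real, EuclideanSpace.volume_ball, Fintype.card_fin, ENNReal.ofReal_one, one_pow,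
    one_mul, Real.Gamma_add_one (by positivity), ENNReal.toReal_ofReal (by positivity), hpi]
  field_simp

/-- Powers of the norm above the critical exponent `-d` are integrable on the punctured unit ball,
with the integral computed in polar coordinates. -/
lemma integrableOn_and_integral_norm_rpow_punctured_ball {d : ℕ} (hd : 1 ≤ d) {p : ℝ}
    (hp : 0 < p + d) :
    IntegrableOn (fun z : EuclideanSpace ℝ (Fin d) => ‖z‖ ^ p)
      {z : EuclideanSpace ℝ (Fin d) | 0 < ‖z‖ ∧ ‖z‖ ≤ 1} ∧
    ∫ z in {z : EuclideanSpace ℝ (Fin d) | 0 < ‖z‖ ∧ ‖z‖ ≤ 1}, ‖z‖ ^ p =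
      2 * Real.pi ^ ((d : ℝ) / 2) / Real.Gamma ((d : ℝ) / 2) / (p + d) := by
  have : Nonempty (Fin d) := ⟨⟨0, hd⟩⟩
  have hmeas : MeasurableSet {z : EuclideanSpace ℝ (Fin d) | 0 < ‖z‖ ∧ ‖z‖ ≤ 1} :=
    measurable_norm measurableSet_Ioc
  have hind : Set.indicator {z : EuclideanSpace ℝ (Fin d) | 0 < ‖z‖ ∧ ‖z‖ ≤ 1}
      (fun z => ‖z‖ ^ p) = fun z => (Set.Ioc (0 : ℝ) 1).indicator (fun t => t ^ p) ‖z‖ := rfl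
  have hradial : (Set.Ioi (0 : ℝ)).EqOn
      (fun t => t ^ (d - 1) • (Set.Ioc (0 : ℝ) 1).indicator (fun t => t ^ p) t)
      ((Set.Ioc (0 : ℝ) 1).indicator fun t => t ^ (p + d - 1)) := by
    intro t ht
    by_cases h : t ∈ Set.Ioc (0 : ℝ) 1
    · simp only [Set.indicator_of_mem h, smul_eq_mul]
      rw [← Real.rpow_natCast, ← Real.rpow_add ht, Nat.cast_sub hd]
      congr 1
      push_cast
      ring
    · simp [Set.indicator_of_notMem h]
  have hinter : Set.Ioi (0 : ℝ) ∩ Set.Ioc 0 1 = Set.Ioc 0 1 :=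
    Set.inter_eq_right.2 fun t ht => ht.1
  constructor
  · rw [← integrable_indicator_iff hmeas, hind, integrable_fun_norm_addHaar,
      finrank_euclideanSpace_fin, integrableOn_congr_fun hradial measurableSet_Ioi, IntegrableOn,
      integrable_indicator_iff measurableSet_Ioc, IntegrableOn,
      Measure.restrict_restrict measurableSet_Ioc, Set.inter_comm, hinter]
    exact (intervalIntegrable_iff_integrableOn_Ioc_of_le zero_le_one).1
      (intervalIntegral.intervalIntegrable_rpow' (by linarith))
  · rw [← integral_indicator hmeas, hind, integral_fun_norm_addHaar, finrank_euclideanSpace_fin,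
      setIntegral_congr_fun measurableSet_Ioi hradial, setIntegral_indicator measurableSet_Ioc,
      hinter, ← intervalIntegral.integral_of_le zero_le_one,
      integral_rpow (Or.inl (by linarith)), ← dim_mul_volume_real_unit_ball hd,
      sub_add_cancel, Real.one_rpow, Real.zero_rpow hp.ne', nsmul_eq_mul, smul_eq_mul]
    ring

/-- For `α ∈ (1,2)`, `β ∈ [1,2]` and any `x ∈ ℝ^d`, the small-jump integral
`∫_{0<|z|≤1} (V_β(x+z) - V_β(x) - ⟨∇V_β(x), z⟩) |z|^{-(α+d)} dz` is absolutely convergent and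
bounded above by `β(3-β)√d σ_{d-1} / (2(2-α))`, where `V_β(x) = (1+|x|²)^{β/2}`,
`∇V_β(x) = β(1+|x|²)^{(β-2)/2} x` and `σ_{d-1} = 2π^{d/2}/Γ(d/2)`. -/
theorem stmt3 (d : ℕ) (hd : 1 ≤ d) (α β : ℝ) (hα1 : 1 < α) (hα2 : α < 2)
    (hβ1 : 1 ≤ β) (hβ2 : β ≤ 2) (x : EuclideanSpace ℝ (Fin d)) :
    IntegrableOn
      (fun z : EuclideanSpace ℝ (Fin d) =>
        ((1 + ‖x + z‖ ^ 2) ^ (β / 2) - (1 + ‖x‖ ^ 2) ^ (β / 2) -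
          ⟪(β * (1 + ‖x‖ ^ 2) ^ ((β - 2) / 2)) • x, z⟫) * ‖z‖ ^ (-(α + d)))
      {z : EuclideanSpace ℝ (Fin d) | 0 < ‖z‖ ∧ ‖z‖ ≤ 1} ∧
    ∫ z in {z : EuclideanSpace ℝ (Fin d) | 0 < ‖z‖ ∧ ‖z‖ ≤ 1},
        ((1 + ‖x + z‖ ^ 2) ^ (β / 2) - (1 + ‖x‖ ^ 2) ^ (β / 2) -
          ⟪(β * (1 + ‖x‖ ^ 2) ^ ((β - 2) / 2)) • x, z⟫) * ‖z‖ ^ (-(α + d))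
      ≤ β * (3 - β) * Real.sqrt d *
          (2 * Real.pi ^ ((d : ℝ) / 2) / Real.Gamma ((d : ℝ) / 2)) / (2 * (2 - α)) := by
  set A := {z : EuclideanSpace ℝ (Fin d) | 0 < ‖z‖ ∧ ‖z‖ ≤ 1}
  have hA : MeasurableSet A := measurable_norm measurableSet_Ioc
  obtain ⟨hint, hval⟩ :=
    integrableOn_and_integral_norm_rpow_punctured_ball hd (p := 2 - (α + d)) (by linarith)
  have hbound : ∀ z ∈ A, ((1 + ‖x + z‖ ^ 2) ^ (β / 2) - (1 + ‖x‖ ^ 2) ^ (β / 2) -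
      ⟪(β * (1 + ‖x‖ ^ 2) ^ ((β - 2) / 2)) • x, z⟫) * ‖z‖ ^ (-(α + d)) ≤
        β / 2 * ‖z‖ ^ (2 - (α + d)) := fun z hz => by
    have hsplit : ‖z‖ ^ (2 - (α + d)) = ‖z‖ ^ 2 * ‖z‖ ^ (-(α + d)) := by
      rw [sub_eq_add_neg, Real.rpow_add hz.1, Real.rpow_two]
    rw [hsplit, ← mul_assoc]
    exact mul_le_mul_of_nonneg_right (taylor_remainder_le (by linarith) hβ2 x z) (by positivity)
  have hdom := hint.const_mul (β / 2)
  have hintegrable : IntegrableOn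
      (fun z : EuclideanSpace ℝ (Fin d) =>
        ((1 + ‖x + z‖ ^ 2) ^ (β / 2) - (1 + ‖x‖ ^ 2) ^ (β / 2) -
          ⟪(β * (1 + ‖x‖ ^ 2) ^ ((β - 2) / 2)) • x, z⟫) * ‖z‖ ^ (-(α + d))) A := by
    refine Integrable.mono' hdom (Measurable.aestronglyMeasurable (by fun_prop)) ?_
    refine ae_restrict_of_forall_mem hA fun z hz => ?_
    rw [Real.norm_of_nonneg (mul_nonneg (taylor_remainder_nonneg hβ1 x z) (by positivity))]
    exact hbound z hz
  refine ⟨hintegrable, (setIntegral_mono_on hintegrable hdom hA hbound).trans ?_⟩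
  have hsqrt : 1 ≤ √(d : ℝ) := Real.one_le_sqrt.2 (by exact_mod_cast hd)
  have hG : 0 < Real.Gamma ((d : ℝ) / 2) :=
    Real.Gamma_pos_of_pos (div_pos (by exact_mod_cast hd) two_pos)
  rw [integral_const_mul, hval, show 2 - (α + d) + d = 2 - α by ring]
  have hα : 0 < 2 - α := by linarith
  have hfactor : 1 ≤ (3 - β) * √(d : ℝ) := one_le_mul_of_one_le_of_one_le (by linarith) hsqrt
  set S := 2 * Real.pi ^ ((d : ℝ) / 2) / Real.Gamma ((d : ℝ) / 2)
  have hS : 0 ≤ S := by positivity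
  calc β / 2 * (S / (2 - α)) = β * S / (2 * (2 - α)) * 1 := by field_simp
    _ ≤ β * S / (2 * (2 - α)) * ((3 - β) * √(d : ℝ)) :=
      mul_le_mul_of_nonneg_left hfactor (by positivity)
    _ = _ := by ring
end

section
/- Let d ≥ 1 and 1 ≤ β < α < 2. Then for every x ∈ ℝ^d the integral ∫_{|z|>1} (V_β(x+z) − V_β(x)) |z|^{−(α+d)} dz is absolutely convergent and satisfies ∫_{|z|>1} (V_β(x+z) − V_β(x)) |z|^{−(α+d)} dz ≤ β σ_{d−1} ( |x|^{β−1}/(α−1) + 1/(α−β) ). -/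
open MeasureTheory
open scoped RealInnerProductSpace

/-- Lipschitz-type bound for `t ↦ (1 + t ^ 2) ^ (β / 2)` on `[0, R]`. -/
theorem abs_one_add_sq_rpow_sub_le {β R a b : ℝ} (hβ1 : 1 ≤ β) (hβ2 : β ≤ 2)
    (ha : a ∈ Set.Icc 0 R) (hb : b ∈ Set.Icc 0 R) :
    |(1 + b ^ 2) ^ (β / 2) - (1 + a ^ 2) ^ (β / 2)| ≤ β * R ^ (β - 1) * |b - a| := by
  have hderiv : ∀ t ∈ Set.Icc 0 R, HasDerivWithinAt (fun t : ℝ => (1 + t ^ 2) ^ (β / 2))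
      (2 * t * (β / 2) * (1 + t ^ 2) ^ (β / 2 - 1)) (Set.Icc 0 R) t := by
    intro t _
    have h : HasDerivAt (fun t : ℝ => 1 + t ^ 2) (2 * t) t := by
      simpa using (hasDerivAt_pow 2 t).const_add 1
    exact (h.rpow_const (Or.inl (by positivity))).hasDerivWithinAt
  refine (convex_Icc 0 R).norm_image_sub_le_of_norm_hasDerivWithin_le hderiv ?_ ha hb
  rintro t ⟨ht0, htR⟩
  rw [Real.norm_of_nonneg (by positivity)]
  have hbound : t * (1 + t ^ 2) ^ (β / 2 - 1) ≤ R ^ (β - 1) := by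
    rcases ht0.eq_or_lt with rfl | ht
    · simpa using Real.rpow_nonneg htR (β - 1)
    · calc t * (1 + t ^ 2) ^ (β / 2 - 1) ≤ t * (t ^ 2) ^ (β / 2 - 1) := by
            gcongr ?_ * ?_
            exact Real.rpow_le_rpow_of_nonpos (by positivity) (by linarith) (by linarith)
        _ = t ^ (β - 1) := by
            rw [← Real.rpow_natCast, ← Real.rpow_mul ht.le]
            nth_rewrite 1 [← Real.rpow_one t]
            rw [← Real.rpow_add ht]
            congr 1
            push_cast
            ring
        _ ≤ R ^ (β - 1) := Real.rpow_le_rpow ht.le htR (by linarith)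
  calc 2 * t * (β / 2) * (1 + t ^ 2) ^ (β / 2 - 1)
      = β * (t * (1 + t ^ 2) ^ (β / 2 - 1)) := by ring
    _ ≤ β * R ^ (β - 1) := by gcongr

theorem abs_one_add_norm_sq_rpow_sub_le {E : Type*} [SeminormedAddCommGroup E] {β : ℝ}
    (hβ1 : 1 ≤ β) (hβ2 : β ≤ 2) (x z : E) :
    |(1 + ‖x + z‖ ^ 2) ^ (β / 2) - (1 + ‖x‖ ^ 2) ^ (β / 2)| ≤
      β * (‖x‖ ^ (β - 1) + ‖z‖ ^ (β - 1)) * ‖z‖ := by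
  have hnorm : |‖x + z‖ - ‖x‖| ≤ ‖z‖ := by simpa using abs_norm_sub_norm_le (x + z) x
  calc _ ≤ β * (‖x‖ + ‖z‖) ^ (β - 1) * |‖x + z‖ - ‖x‖| :=
        abs_one_add_sq_rpow_sub_le hβ1 hβ2 ⟨norm_nonneg _, by simp⟩
          ⟨norm_nonneg _, norm_add_le _ _⟩
    _ ≤ _ := by
        gcongr
        exact Real.rpow_add_le_add_rpow (norm_nonneg _) (norm_nonneg _)
          (by linarith) (by linarith)

theorem natCast_mul_volume_real_unit_ball {d : ℕ} (hd : 1 ≤ d) :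
    (d : ℝ) * volume.real (Metric.ball (0 : EuclideanSpace ℝ (Fin d)) 1) =
      2 * Real.pi ^ ((d : ℝ) / 2) / Real.Gamma ((d : ℝ) / 2) := by
  have : Nonempty (Fin d) := ⟨⟨0, hd⟩⟩
  have hd0 : (0 : ℝ) < d := by exact_mod_cast hd
  have hG : 0 < Real.Gamma ((d : ℝ) / 2) := Real.Gamma_pos_of_pos (by positivity)
  have hsqrt : √Real.pi ^ d = Real.pi ^ ((d : ℝ) / 2) := by
    rw [Real.sqrt_eq_rpow, ← Real.rpow_natCast, ← Real.rpow_mul Real.pi_pos.le]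
    congr 1
    ring
  rw [Measure.real, EuclideanSpace.volume_ball, Fintype.card_fin, hsqrt,
    Real.Gamma_add_one (by positivity), ENNReal.ofReal_one, one_pow, one_mul,
    ENNReal.toReal_ofReal (by positivity)]
  field_simp

/-- The radial profile `r ^ (-(s + d))` on `r > 1`, weighted by the polar Jacobian. -/
theorem pow_smul_indicator_Ioi_rpow {d : ℕ} (hd : 1 ≤ d) (s : ℝ) :
    (fun y : ℝ => y ^ (d - 1) • (Set.Ioi 1).indicator (fun r : ℝ => r ^ (-(s + d))) y) =
      (Set.Ioi 1).indicator (fun r : ℝ => r ^ (-s - 1)) := by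
  funext y
  by_cases hy : y ∈ Set.Ioi (1 : ℝ)
  · have hy0 : 0 < y := zero_lt_one.trans hy
    simp only [Set.indicator_of_mem hy, smul_eq_mul]
    rw [← Real.rpow_natCast, ← Real.rpow_add hy0, Nat.cast_sub hd]
    congr 1
    push_cast
    ring
  · simp [Set.indicator_of_notMem hy]

theorem setOf_one_lt_norm_indicator_rpow {E : Type*} [Norm E] (p : ℝ) :
    {z : E | 1 < ‖z‖}.indicator (fun z => ‖z‖ ^ p) =
      fun z => (Set.Ioi 1).indicator (fun r : ℝ => r ^ p) ‖z‖ := by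
  funext z
  simp [Set.indicator]

theorem integrableOn_one_lt_norm_rpow {d : ℕ} (hd : 1 ≤ d) {s : ℝ} (hs : 0 < s) :
    IntegrableOn (fun z : EuclideanSpace ℝ (Fin d) => ‖z‖ ^ (-(s + d))) {z | 1 < ‖z‖} := by
  have : Nonempty (Fin d) := ⟨⟨0, hd⟩⟩
  rw [← integrable_indicator_iff (measurableSet_lt measurable_const measurable_norm),
    setOf_one_lt_norm_indicator_rpow, integrable_fun_norm_addHaar, finrank_euclideanSpace_fin,
    pow_smul_indicator_Ioi_rpow hd]
  exact ((integrable_indicator_iff measurableSet_Ioi).2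
    (integrableOn_Ioi_rpow_of_lt (by linarith) one_pos)).integrableOn

theorem setIntegral_one_lt_norm_rpow {d : ℕ} (hd : 1 ≤ d) {s : ℝ} (hs : 0 < s) :
    ∫ z in {z : EuclideanSpace ℝ (Fin d) | 1 < ‖z‖}, ‖z‖ ^ (-(s + d)) =
      2 * Real.pi ^ ((d : ℝ) / 2) / Real.Gamma ((d : ℝ) / 2) * (1 / s) := by
  have : Nonempty (Fin d) := ⟨⟨0, hd⟩⟩
  rw [← integral_indicator (measurableSet_lt measurable_const measurable_norm),
    setOf_one_lt_norm_indicator_rpow, integral_fun_norm_addHaar, finrank_euclideanSpace_fin,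
    pow_smul_indicator_Ioi_rpow hd, setIntegral_indicator measurableSet_Ioi,
    Set.inter_eq_right.2 (Set.Ioi_subset_Ioi zero_le_one),
    integral_Ioi_rpow_of_lt (by linarith) one_pos, Real.one_rpow, nsmul_eq_mul, smul_eq_mul,
    ← mul_assoc, natCast_mul_volume_real_unit_ball hd]
  congr 1
  rw [sub_add_cancel, neg_div_neg_eq]

/-- For `1 ≤ β < α < 2` and any `x ∈ ℝ^d`, the large-jump integral
`∫_{|z|>1} (V_β(x+z) - V_β(x)) |z|^{-(α+d)} dz` is absolutely convergent and bounded above by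
`β σ_{d-1} (|x|^{β-1}/(α-1) + 1/(α-β))`, where `V_β(x) = (1+|x|²)^{β/2}` and
`σ_{d-1} = 2π^{d/2}/Γ(d/2)`. -/
theorem stmt4 (d : ℕ) (hd : 1 ≤ d) (α β : ℝ) (hβ1 : 1 ≤ β) (hβα : β < α) (hα2 : α < 2)
    (x : EuclideanSpace ℝ (Fin d)) :
    IntegrableOn
      (fun z : EuclideanSpace ℝ (Fin d) =>
        ((1 + ‖x + z‖ ^ 2) ^ (β / 2) - (1 + ‖x‖ ^ 2) ^ (β / 2)) * ‖z‖ ^ (-(α + d)))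
      {z : EuclideanSpace ℝ (Fin d) | 1 < ‖z‖} ∧
    ∫ z in {z : EuclideanSpace ℝ (Fin d) | 1 < ‖z‖},
        ((1 + ‖x + z‖ ^ 2) ^ (β / 2) - (1 + ‖x‖ ^ 2) ^ (β / 2)) * ‖z‖ ^ (-(α + d))
      ≤ β * (2 * Real.pi ^ ((d : ℝ) / 2) / Real.Gamma ((d : ℝ) / 2)) *
          (‖x‖ ^ (β - 1) / (α - 1) + 1 / (α - β)) := by
  have hmeas : MeasurableSet {z : EuclideanSpace ℝ (Fin d) | 1 < ‖z‖} :=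
    measurableSet_lt measurable_const measurable_norm
  have hs₁ : 0 < α - 1 := by linarith
  have hs₂ : 0 < α - β := by linarith
  have hint₁ := (integrableOn_one_lt_norm_rpow hd hs₁).const_mul (β * ‖x‖ ^ (β - 1))
  have hint₂ := (integrableOn_one_lt_norm_rpow hd hs₂).const_mul β
  have hbound : ∀ z ∈ {z : EuclideanSpace ℝ (Fin d) | 1 < ‖z‖},
      ‖((1 + ‖x + z‖ ^ 2) ^ (β / 2) - (1 + ‖x‖ ^ 2) ^ (β / 2)) * ‖z‖ ^ (-(α + d))‖ ≤
        β * ‖x‖ ^ (β - 1) * ‖z‖ ^ (-(α - 1 + d)) + β * ‖z‖ ^ (-(α - β + d)) := by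
    intro z hz
    have hz0 : 0 < ‖z‖ := zero_lt_one.trans hz
    have h₁ : ‖z‖ ^ (-(α - 1 + d)) = ‖z‖ * ‖z‖ ^ (-(α + d)) := by
      rw [← Real.rpow_one_add' hz0.le (by have := d.cast_nonneg (α := ℝ); linarith)]
      congr 1
      ring
    have h₂ : ‖z‖ ^ (-(α - β + d)) = ‖z‖ ^ (β - 1) * ‖z‖ ^ (-(α - 1 + d)) := by
      rw [← Real.rpow_add hz0]
      congr 1
      ring
    rw [norm_mul, Real.norm_eq_abs, Real.norm_of_nonneg (Real.rpow_nonneg hz0.le _), h₂, h₁]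
    calc _ ≤ β * (‖x‖ ^ (β - 1) + ‖z‖ ^ (β - 1)) * ‖z‖ * ‖z‖ ^ (-(α + d)) := by
          gcongr
          exact abs_one_add_norm_sq_rpow_sub_le hβ1 (by linarith) x z
      _ = _ := by ring
  have hint : IntegrableOn
      (fun z : EuclideanSpace ℝ (Fin d) =>
        ((1 + ‖x + z‖ ^ 2) ^ (β / 2) - (1 + ‖x‖ ^ 2) ^ (β / 2)) * ‖z‖ ^ (-(α + d)))
      {z : EuclideanSpace ℝ (Fin d) | 1 < ‖z‖} :=
    (hint₁.add hint₂).mono' (Measurable.aestronglyMeasurable (by fun_prop))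
      ((ae_restrict_iff' hmeas).2 (.of_forall hbound))
  refine ⟨hint, ?_⟩
  calc _ ≤ ∫ z in {z : EuclideanSpace ℝ (Fin d) | 1 < ‖z‖},
        (β * ‖x‖ ^ (β - 1) * ‖z‖ ^ (-(α - 1 + d)) + β * ‖z‖ ^ (-(α - β + d))) :=
        setIntegral_mono_on hint (hint₁.add hint₂) hmeas
          fun z hz => (Real.le_norm_self _).trans (hbound z hz)
    _ = _ := by
        rw [integral_add hint₁ hint₂, integral_const_mul, integral_const_mul,
          setIntegral_one_lt_norm_rpow hd hs₁, setIntegral_one_lt_norm_rpow hd hs₂]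
        ring
end

section
/- Let d ≥ 1, α ∈ (1,2), and let b : ℝ^d → ℝ^d satisfy Assumption (A) with parameter θ ≥ 0. Fix β ∈ [1,α) and define, for x ∈ ℝ^d, A V_β(x) = ⟨b(x), ∇V_β(x)⟩ + C_{d,α} ∫_{ℝ^d∖{0}} ( V_β(x+z) − V_β(x) − ⟨∇V_β(x), z⟩ 𝟙_{(0,1)}(|z|) ) |z|^{−(α+d)} dz, where the integral is absolutely convergent. Then there exist constants C₁ > 0 and C₂ > 0 such that A V_β(x) ≤ −C₁ V_β(x)^{1+θ/β} + C₂ for every x ∈ ℝ^d. -/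
open MeasureTheory
open scoped RealInnerProductSpace

section Bracket

variable {E : Type*} [NormedAddCommGroup E]

/-- The Japanese bracket `(1 + ‖x‖²)^{1/2}`. -/
noncomputable def bracket (x : E) : ℝ := √(1 + ‖x‖ ^ 2)

lemma bracket_sq (x : E) : bracket x ^ 2 = 1 + ‖x‖ ^ 2 := Real.sq_sqrt (by positivity)

lemma one_le_bracket (x : E) : 1 ≤ bracket x :=
  Real.one_le_sqrt.2 (by nlinarith [sq_nonneg ‖x‖])

lemma bracket_pos (x : E) : 0 < bracket x := one_pos.trans_le (one_le_bracket x)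

lemma norm_le_bracket (x : E) : ‖x‖ ≤ bracket x := Real.le_sqrt_of_sq_le (by linarith)

lemma rpow_half_eq_bracket_rpow (x : E) (p : ℝ) : (1 + ‖x‖ ^ 2) ^ (p / 2) = bracket x ^ p := by
  rw [← bracket_sq, ← Real.rpow_natCast, ← Real.rpow_mul (bracket_pos x).le]
  congr 1
  push_cast
  ring

lemma bracket_add_le {x z : E} (hz : 1 ≤ ‖z‖) : bracket (x + z) ≤ 2 * bracket x * ‖z‖ := by
  have hx := bracket_pos x
  refine (abs_le_of_sq_le_sq' ?_ (by positivity)).2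
  rw [mul_pow, mul_pow, bracket_sq, bracket_sq]
  have h1 := norm_add_le x z
  have h2 : ‖x + z‖ ^ 2 ≤ (‖x‖ + ‖z‖) ^ 2 := by gcongr
  have h3 : 1 ≤ ‖z‖ ^ 2 := by nlinarith
  nlinarith [sq_nonneg (‖x‖ - ‖z‖), mul_nonneg (sq_nonneg ‖x‖) (sub_nonneg.2 h3)]

lemma bracket_rpow_sub_two_mul_bracket (β : ℝ) (x : E) :
    bracket x ^ (β - 2) * bracket x = bracket x ^ (β - 1) := by
  rw [← Real.rpow_add_one (bracket_pos x).ne']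
  congr 1
  ring

lemma bracket_rpow_le {p : ℝ} (hp : 0 ≤ p) (x : E) : bracket x ^ p ≤ 2 ^ p * (1 + ‖x‖ ^ p) := by
  have h : bracket x ≤ 2 * max 1 ‖x‖ := by
    refine (abs_le_of_sq_le_sq' ?_ (by positivity)).2
    rw [bracket_sq]
    nlinarith [le_max_left 1 ‖x‖, le_max_right 1 ‖x‖, norm_nonneg x]
  calc bracket x ^ p ≤ (2 * max 1 ‖x‖) ^ p := Real.rpow_le_rpow (bracket_pos x).le h hp
    _ = 2 ^ p * (max 1 ‖x‖) ^ p := Real.mul_rpow (by norm_num) (by positivity)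
    _ ≤ _ := by
      gcongr
      rcases max_choice 1 ‖x‖ with h | h <;> rw [h]
      · rw [Real.one_rpow]
        linarith [Real.rpow_nonneg (norm_nonneg x) p]
      · linarith

variable [InnerProductSpace ℝ E]

lemma bracket_mul_bracket_ge (x y : E) : 1 + ⟪x, y⟫ ≤ bracket x * bracket y := by
  have h := real_inner_le_norm x y
  have hx := bracket_sq x
  have hy := bracket_sq y
  refine le_trans (by linarith : _ ≤ 1 + ‖x‖ * ‖y‖) (abs_le_of_sq_le_sq' ?_ ?_).2
  · rw [mul_pow, hx, hy]
    nlinarith [sq_nonneg (‖x‖ - ‖y‖)]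
  · exact (mul_pos (bracket_pos x) (bracket_pos y)).le

/-- First-order convexity inequality for `x ↦ (1 + ‖x‖²)^{β/2}`. -/
lemma bracket_rpow_convex {β : ℝ} (hβ : 1 ≤ β) (x y : E) :
    bracket x ^ β + β * bracket x ^ (β - 2) * ⟪x, y - x⟫ ≤ bracket y ^ β := by
  have hx := bracket_pos x
  have hy := bracket_pos y
  have hB := one_add_mul_self_le_rpow_one_add (s := bracket y / bracket x - 1)
    (by linarith [div_pos hy hx]) hβ
  rw [add_sub_cancel, Real.div_rpow hy.le hx.le, le_div_iff₀ (by positivity)] at hB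
  have hsplit : bracket x ^ β = bracket x ^ (β - 2) * bracket x ^ 2 := by
    rw [← Real.rpow_natCast, ← Real.rpow_add hx]
    norm_num
  have hsub : ⟪x, y - x⟫ ≤ bracket x * bracket y - bracket x ^ 2 := by
    rw [inner_sub_right, real_inner_self_eq_norm_sq, bracket_sq]
    linarith [bracket_mul_bracket_ge x y]
  refine le_trans ?_ hB
  have hp : 0 < bracket x ^ (β - 2) := by positivity
  have key : (1 + β * (bracket y / bracket x - 1)) * bracket x ^ β =
      bracket x ^ β + β * bracket x ^ (β - 2) * (bracket x * bracket y - bracket x ^ 2) := by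
    rw [hsplit]
    field_simp
  rw [key]
  gcongr

/-- One-sided second-order bound, from concavity of `u ↦ u^{β/2}`. -/
lemma bracket_rpow_add_le {β : ℝ} (hβ0 : 0 ≤ β) (hβ2 : β ≤ 2) (x z : E) :
    bracket (x + z) ^ β ≤
      bracket x ^ β + β * bracket x ^ (β - 2) * ⟪x, z⟫ + ‖z‖ ^ 2 := by
  have hx := bracket_pos x
  have hy := bracket_pos (x + z)
  have hB := rpow_one_add_le_one_add_mul_self
    (s := bracket (x + z) ^ 2 / bracket x ^ 2 - 1)
    (by linarith [show 0 < bracket (x + z) ^ 2 / bracket x ^ 2 by positivity])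
    (p := β / 2) (by positivity) (by linarith)
  rw [add_sub_cancel, Real.div_rpow (by positivity) (by positivity), div_le_iff₀ (by positivity),
    bracket_sq (x + z), bracket_sq x, rpow_half_eq_bracket_rpow, rpow_half_eq_bracket_rpow,
    ← bracket_sq x, norm_add_sq_real] at hB
  have hsplit : bracket x ^ β = bracket x ^ (β - 2) * bracket x ^ 2 := by
    rw [← Real.rpow_natCast, ← Real.rpow_add hx]
    norm_num
  have key : (1 + β / 2 * ((1 + (‖x‖ ^ 2 + 2 * ⟪x, z⟫ + ‖z‖ ^ 2)) / bracket x ^ 2 - 1))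
      * bracket x ^ β =
      bracket x ^ β + β * bracket x ^ (β - 2) * ⟪x, z⟫
        + β / 2 * bracket x ^ (β - 2) * ‖z‖ ^ 2 := by
    rw [show (1 + (‖x‖ ^ 2 + 2 * ⟪x, z⟫ + ‖z‖ ^ 2)) =
      bracket x ^ 2 + 2 * ⟪x, z⟫ + ‖z‖ ^ 2 by rw [bracket_sq]; ring, hsplit]
    field_simp
    ring
  have hle : bracket x ^ (β - 2) ≤ 1 :=
    Real.rpow_le_one_of_one_le_of_nonpos (one_le_bracket x) (by linarith)
  have hp : 0 < bracket x ^ (β - 2) := by positivity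
  have : β / 2 * bracket x ^ (β - 2) ≤ 1 := by nlinarith
  nlinarith [sq_nonneg ‖z‖]

lemma abs_bracket_rpow_mul_inner_le {β : ℝ} (hβ1 : 1 ≤ β) (hβ2 : β ≤ 2) (x z : E) :
    |β * bracket x ^ (β - 2) * ⟪x, z⟫| ≤ 2 * bracket x ^ (β - 1) * ‖z‖ := by
  have hx := bracket_pos x
  rw [abs_mul, abs_of_nonneg (by positivity), ← bracket_rpow_sub_two_mul_bracket]
  calc β * bracket x ^ (β - 2) * |⟪x, z⟫|
      ≤ 2 * bracket x ^ (β - 2) * (bracket x * ‖z‖) := by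
        gcongr
        exact (abs_real_inner_le_norm x z).trans (by gcongr; exact norm_le_bracket x)
    _ = _ := by ring

lemma abs_bracket_rpow_add_sub_le {β : ℝ} (hβ1 : 1 ≤ β) (hβ2 : β ≤ 2) {x z : E}
    (hz : 1 ≤ ‖z‖) :
    |bracket (x + z) ^ β - bracket x ^ β| ≤ 4 * bracket x ^ (β - 1) * ‖z‖ ^ β := by
  have hx := bracket_pos x
  have hxz := bracket_pos (x + z)
  have hz0 : 0 < ‖z‖ := one_pos.trans_le hz
  have hzβ : ‖z‖ ≤ ‖z‖ ^ β := Real.self_le_rpow_of_one_le hz hβ1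
  have hp : 0 < bracket x ^ (β - 1) := by positivity
  rw [abs_le]
  constructor
  · have h1 := bracket_rpow_convex hβ1 x (x + z)
    rw [add_sub_cancel_left] at h1
    have h2 := (abs_le.1 (abs_bracket_rpow_mul_inner_le hβ1 hβ2 x z)).1
    nlinarith [mul_le_mul_of_nonneg_left hzβ hp.le]
  · have h1 := bracket_rpow_convex hβ1 (x + z) x
    have h2 := (abs_le.1 (abs_bracket_rpow_mul_inner_le hβ1 hβ2 (x + z) (x - (x + z)))).1
    have h3 : ‖x - (x + z)‖ = ‖z‖ := by simp
    rw [h3] at h2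
    have h4 : bracket (x + z) ^ (β - 1) ≤ 2 * bracket x ^ (β - 1) * ‖z‖ ^ (β - 1) := by
      calc bracket (x + z) ^ (β - 1) ≤ (2 * bracket x * ‖z‖) ^ (β - 1) :=
            Real.rpow_le_rpow hxz.le (bracket_add_le hz) (by linarith)
        _ = 2 ^ (β - 1) * bracket x ^ (β - 1) * ‖z‖ ^ (β - 1) := by
            rw [Real.mul_rpow (by positivity) hz0.le, Real.mul_rpow (by positivity) hx.le]
        _ ≤ _ := by
            gcongr
            calc (2 : ℝ) ^ (β - 1) ≤ 2 ^ (1 : ℝ) :=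
                  Real.rpow_le_rpow_of_exponent_le (by norm_num) (by linarith)
              _ = 2 := Real.rpow_one 2
    have h5 : ‖z‖ ^ β = ‖z‖ ^ (β - 1) * ‖z‖ := by
      rw [← Real.rpow_add_one hz0.ne', sub_add_cancel]
    rw [h5]
    nlinarith [mul_le_mul_of_nonneg_right h4 hz0.le]

end Bracket

section Kernel

variable {E : Type*} [NormedAddCommGroup E] [InnerProductSpace ℝ E]

/-- Radial weight dominating the integrand of the nonlocal operator. -/
noncomputable def levyWeight (β s r : ℝ) : ℝ :=
  (if r < 1 then r ^ (2 : ℝ) else r ^ β) * r ^ (-s)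

lemma levyWeight_nonneg (β s : ℝ) {r : ℝ} (hr : 0 ≤ r) : 0 ≤ levyWeight β s r := by
  unfold levyWeight
  split_ifs <;> positivity

lemma integrable_levyWeight_norm [MeasurableSpace E] [BorelSpace E] [FiniteDimensional ℝ E]
    [Nontrivial E] {α β : ℝ} (hα2 : α < 2) (hβα : β < α) :
    Integrable (fun z : E => levyWeight β (α + Module.finrank ℝ E) ‖z‖) := by
  rw [integrable_fun_norm_addHaar volume (f := levyWeight β (α + Module.finrank ℝ E))]
  have hn : 1 ≤ Module.finrank ℝ E := Module.finrank_pos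
  have hpow : ∀ p : ℝ, ∀ y : ℝ, 0 < y →
      y ^ (Module.finrank ℝ E - 1) * (y ^ p * y ^ (-(α + Module.finrank ℝ E))) =
        y ^ (p - α - 1) := by
    intro p y hy
    rw [← Real.rpow_natCast, ← Real.rpow_add hy, ← Real.rpow_add hy]
    congr 1
    push_cast [hn]
    ring
  rw [← Set.Ioo_union_Ici_eq_Ioi (zero_lt_one' ℝ), integrableOn_union]
  constructor
  · refine ((intervalIntegral.integrableOn_Ioo_rpow_iff (s := 2 - α - 1) one_pos).2
      (by linarith)).congr_fun (fun y hy => ?_) measurableSet_Ioo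
    simp only [levyWeight, if_pos hy.2, smul_eq_mul, hpow 2 y hy.1]
  · refine ((integrableOn_Ici_iff_integrableOn_Ioi).2
      (integrableOn_Ioi_rpow_of_lt (a := β - α - 1) (by linarith) one_pos)).congr_fun
        (fun y hy => ?_) measurableSet_Ici
    have hy : 1 ≤ y := hy
    simp only [levyWeight, if_neg hy.not_gt, smul_eq_mul, hpow β y (by linarith)]

/-- Integrand of the nonlocal part of the generator at `(1 + ‖x‖²)^{β/2}`. -/
noncomputable def levyIntegrand (β s : ℝ) (x z : E) : ℝ :=
  ((1 + ‖x + z‖ ^ 2) ^ (β / 2) - (1 + ‖x‖ ^ 2) ^ (β / 2) -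
    Set.indicator (Set.Ioo (0 : ℝ) 1)
      (fun _ => ⟪(β * (1 + ‖x‖ ^ 2) ^ ((β - 2) / 2)) • x, z⟫) ‖z‖) * ‖z‖ ^ (-s)

lemma abs_levyIntegrand_le {β : ℝ} (hβ1 : 1 ≤ β) (hβ2 : β ≤ 2) (s : ℝ) {x z : E} (hz : z ≠ 0) :
    |levyIntegrand β s x z| ≤ 4 * bracket x ^ (β - 1) * levyWeight β s ‖z‖ := by
  have hz0 : 0 < ‖z‖ := norm_pos_iff.2 hz
  have hx := bracket_pos x
  unfold levyIntegrand levyWeight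
  rw [abs_mul, abs_of_nonneg (by positivity : 0 ≤ ‖z‖ ^ (-s)), ← mul_assoc]
  gcongr
  simp only [rpow_half_eq_bracket_rpow, real_inner_smul_left]
  split_ifs with h
  · rw [Set.indicator_of_mem (Set.mem_Ioo.2 ⟨hz0, h⟩)]
    have h1 := bracket_rpow_convex hβ1 x (x + z)
    rw [add_sub_cancel_left] at h1
    have h2 := bracket_rpow_add_le (by linarith) hβ2 x z
    have h3 : 1 ≤ bracket x ^ (β - 1) := Real.one_le_rpow (one_le_bracket x) (by linarith)
    rw [abs_of_nonneg (by linarith), Real.rpow_two]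
    nlinarith [sq_nonneg ‖z‖]
  · rw [Set.indicator_of_notMem (fun hm => h hm.2), sub_zero]
    exact abs_bracket_rpow_add_sub_le hβ1 hβ2 (not_lt.1 h)

variable [MeasurableSpace E] [BorelSpace E]

lemma measurable_levyIntegrand [SecondCountableTopology E] (β s : ℝ) (x : E) :
    Measurable (levyIntegrand β s x) := by
  have hind : (fun z : E => Set.indicator (Set.Ioo (0 : ℝ) 1)
      (fun _ => ⟪(β * (1 + ‖x‖ ^ 2) ^ ((β - 2) / 2)) • x, z⟫) ‖z‖) =
      Set.indicator ((fun z : E => ‖z‖) ⁻¹' Set.Ioo (0 : ℝ) 1)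
        (fun z => ⟪(β * (1 + ‖x‖ ^ 2) ^ ((β - 2) / 2)) • x, z⟫) := rfl
  have hm : Measurable (fun z : E => Set.indicator (Set.Ioo (0 : ℝ) 1)
      (fun _ => ⟪(β * (1 + ‖x‖ ^ 2) ^ ((β - 2) / 2)) • x, z⟫) ‖z‖) := by
    rw [hind]
    exact (by fun_prop : Measurable _).indicator (measurable_norm measurableSet_Ioo)
  unfold levyIntegrand
  exact (Measurable.sub (by fun_prop) hm).mul (by fun_prop)

variable [FiniteDimensional ℝ E] [Nontrivial E]

lemma integrableOn_levyIntegrand {α β : ℝ} (hα2 : α < 2) (hβ1 : 1 ≤ β) (hβα : β < α) (x : E) :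
    IntegrableOn (levyIntegrand β (α + Module.finrank ℝ E) x) {z : E | z ≠ 0} := by
  refine Integrable.mono'
    (((integrable_levyWeight_norm hα2 hβα).const_mul (4 * bracket x ^ (β - 1))).integrableOn)
    (measurable_levyIntegrand β _ x).aestronglyMeasurable ?_
  filter_upwards [ae_restrict_mem (measurableSet_singleton (0 : E)).compl] with z hz
  exact abs_levyIntegrand_le hβ1 (by linarith) _ hz

lemma integral_levyIntegrand_le {α β : ℝ} (hα2 : α < 2) (hβ1 : 1 ≤ β) (hβα : β < α) (x : E) :
    ∫ z in {z : E | z ≠ 0}, levyIntegrand β (α + Module.finrank ℝ E) x z ≤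
      4 * (∫ z : E, levyWeight β (α + Module.finrank ℝ E) ‖z‖) * bracket x ^ (β - 1) := by
  have hint := (integrable_levyWeight_norm (E := E) hα2 hβα).const_mul
    (4 * bracket x ^ (β - 1))
  calc _ ≤ ∫ z in {z : E | z ≠ 0},
        4 * bracket x ^ (β - 1) * levyWeight β (α + Module.finrank ℝ E) ‖z‖ := by
        refine setIntegral_mono_on (integrableOn_levyIntegrand hα2 hβ1 hβα x) hint.integrableOn
          (measurableSet_singleton (0 : E)).compl fun z hz => ?_
        exact (le_abs_self _).trans (abs_levyIntegrand_le hβ1 (by linarith) _ hz)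
    _ ≤ ∫ z : E, 4 * bracket x ^ (β - 1) * levyWeight β (α + Module.finrank ℝ E) ‖z‖ := by
        refine setIntegral_le_integral hint (Filter.Eventually.of_forall fun z => ?_)
        have := bracket_pos x
        have := levyWeight_nonneg β (α + Module.finrank ℝ E) (norm_nonneg z)
        simp only [Pi.zero_apply]
        positivity
    _ = _ := by
        rw [integral_const_mul]
        ring

end Kernel

section Drift

variable {E : Type*} [NormedAddCommGroup E] [InnerProductSpace ℝ E]

/-- Dissipativity at infinity: `⟨b x, x⟩ ≤ -k ⟨x⟩^{2+θ} + N ⟨x⟩`. -/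
lemma exists_inner_drift_le {θ K₁ K₂ L : ℝ} (hθ : 0 ≤ θ) (hK₁ : 0 < K₁) (hK₂ : 0 < K₂)
    (hL : 0 < L) (b : E → E)
    (hb1 : ∀ x y : E, ‖x - y‖ ≤ L → ⟪b x - b y, x - y⟫ ≤ K₁ * ‖x - y‖ ^ 2)
    (hb2 : ∀ x y : E, L < ‖x - y‖ → ⟪b x - b y, x - y⟫ ≤ -K₂ * ‖x - y‖ ^ (2 + θ)) :
    ∃ k N : ℝ, 0 < k ∧ 0 < N ∧
      ∀ x : E, ⟪b x, x⟫ ≤ -k * bracket x ^ (2 + θ) + N * bracket x := by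
  set M := K₁ * L ^ 2 + K₂ * L ^ (2 + θ)
  have hM0 : 0 < M := by positivity
  refine ⟨K₂ / 2 ^ (2 + θ), ‖b 0‖ + K₂ + M, by positivity, by positivity, fun x => ?_⟩
  have hW := one_le_bracket x
  have h0 : ⟪b x - b 0, x⟫ ≤ -K₂ * ‖x‖ ^ (2 + θ) + M := by
    rcases le_or_gt ‖x‖ L with h | h
    · have h1 := hb1 x 0 (by simpa using h)
      rw [sub_zero] at h1
      have h2 : K₁ * ‖x‖ ^ 2 ≤ K₁ * L ^ 2 := by gcongr
      have h3 : K₂ * ‖x‖ ^ (2 + θ) ≤ K₂ * L ^ (2 + θ) := by gcongr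
      linarith
    · have h1 := hb2 x 0 (by simpa using h)
      rw [sub_zero] at h1
      linarith
  rw [inner_sub_left] at h0
  have h1 : ⟪b 0, x⟫ ≤ ‖b 0‖ * bracket x :=
    (real_inner_le_norm _ _).trans (by gcongr; exact norm_le_bracket x)
  have h2 : K₂ / 2 ^ (2 + θ) * bracket x ^ (2 + θ) ≤ K₂ * (1 + ‖x‖ ^ (2 + θ)) := by
    rw [div_mul_eq_mul_div, div_le_iff₀ (by positivity), mul_assoc]
    gcongr
    rw [mul_comm]
    exact bracket_rpow_le (by linarith) x
  nlinarith

/-- A lower-order power is absorbed by a higher-order one up to a constant. -/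
lemma mul_rpow_sub_one_le {k D β θ w : ℝ} (hk : 0 < k) (hD : 0 < D) (hβ : 1 ≤ β) (hθ : 0 ≤ θ)
    (hw : 1 ≤ w) :
    D * w ^ (β - 1) ≤ k / 2 * w ^ (β + θ) + D * (2 * D / k) ^ (β - 1) := by
  have hw0 : 0 < w := by linarith
  rcases le_or_gt w (2 * D / k) with h | h
  · have : w ^ (β - 1) ≤ (2 * D / k) ^ (β - 1) := Real.rpow_le_rpow hw0.le h (by linarith)
    have h2 : 0 ≤ k / 2 * w ^ (β + θ) := by positivity
    nlinarith
  · have h1 : D ≤ k / 2 * w := by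
      rw [div_lt_iff₀ hk] at h
      linarith
    have h2 : 0 ≤ D * (2 * D / k) ^ (β - 1) := by positivity
    calc D * w ^ (β - 1) ≤ k / 2 * w * w ^ (β - 1) := by gcongr
      _ = k / 2 * w ^ β := by
        rw [mul_assoc, mul_comm w, ← Real.rpow_add_one hw0.ne', sub_add_cancel]
      _ ≤ k / 2 * w ^ (β + θ) := by
        gcongr
        linarith
      _ ≤ _ := by linarith

end Drift

/-- Lyapunov estimate for the generator of the stable-driven SDE: if `b` satisfies
Assumption (A) with parameter `θ ≥ 0`, `α ∈ (1,2)` and `β ∈ [1,α)`, then the integral defining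
`A V_β(x)` is absolutely convergent and there are constants `C₁, C₂ > 0` with
`A V_β(x) ≤ -C₁ V_β(x)^{1+θ/β} + C₂` for all `x`, where
`A V_β(x) = ⟨b(x), ∇V_β(x)⟩ + C_{d,α} ∫_{ℝ^d∖{0}} (V_β(x+z) - V_β(x)
  - ⟨∇V_β(x), z⟩ 𝟙_{(0,1)}(|z|)) |z|^{-(α+d)} dz`. -/
theorem stmt5 (d : ℕ) (hd : 1 ≤ d) (α θ K₁ K₂ L : ℝ) (hα1 : 1 < α) (hα2 : α < 2)
    (hθ : 0 ≤ θ) (hK₁ : 0 < K₁) (hK₂ : 0 < K₂) (hL : 0 < L)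
    (b : EuclideanSpace ℝ (Fin d) → EuclideanSpace ℝ (Fin d))
    (hb : Differentiable ℝ b)
    (hb1 : ∀ x y : EuclideanSpace ℝ (Fin d), ‖x - y‖ ≤ L →
      ⟪b x - b y, x - y⟫ ≤ K₁ * ‖x - y‖ ^ 2)
    (hb2 : ∀ x y : EuclideanSpace ℝ (Fin d), L < ‖x - y‖ →
      ⟪b x - b y, x - y⟫ ≤ -K₂ * ‖x - y‖ ^ (2 + θ))
    (β : ℝ) (hβ1 : 1 ≤ β) (hβα : β < α) :
    (∀ x : EuclideanSpace ℝ (Fin d),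
      IntegrableOn
        (fun z : EuclideanSpace ℝ (Fin d) =>
          ((1 + ‖x + z‖ ^ 2) ^ (β / 2) - (1 + ‖x‖ ^ 2) ^ (β / 2) -
            Set.indicator (Set.Ioo (0 : ℝ) 1)
              (fun _ => ⟪(β * (1 + ‖x‖ ^ 2) ^ ((β - 2) / 2)) • x, z⟫) ‖z‖) *
            ‖z‖ ^ (-(α + d)))
        {z : EuclideanSpace ℝ (Fin d) | z ≠ 0}) ∧
    ∃ C₁ C₂ : ℝ, 0 < C₁ ∧ 0 < C₂ ∧ ∀ x : EuclideanSpace ℝ (Fin d),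
      ⟪b x, (β * (1 + ‖x‖ ^ 2) ^ ((β - 2) / 2)) • x⟫ +
        (α * (2 : ℝ) ^ (α - 1) * Real.pi ^ (-(d : ℝ) / 2) *
            Real.Gamma ((d + α) / 2) / Real.Gamma (1 - α / 2)) *
          ∫ z in {z : EuclideanSpace ℝ (Fin d) | z ≠ 0},
            ((1 + ‖x + z‖ ^ 2) ^ (β / 2) - (1 + ‖x‖ ^ 2) ^ (β / 2) -
              Set.indicator (Set.Ioo (0 : ℝ) 1)
                (fun _ => ⟪(β * (1 + ‖x‖ ^ 2) ^ ((β - 2) / 2)) • x, z⟫) ‖z‖) *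
              ‖z‖ ^ (-(α + d))
      ≤ -C₁ * ((1 + ‖x‖ ^ 2) ^ (β / 2)) ^ (1 + θ / β) + C₂ := by
  have : Nonempty (Fin d) := ⟨⟨0, hd⟩⟩
  have hint := integrableOn_levyIntegrand (E := EuclideanSpace ℝ (Fin d)) hα2 hβ1 hβα
  have hle := integral_levyIntegrand_le (E := EuclideanSpace ℝ (Fin d)) hα2 hβ1 hβα
  rw [finrank_euclideanSpace_fin] at hint hle
  refine ⟨hint, ?_⟩
  obtain ⟨k, N, hk, hN, hdrift⟩ := exists_inner_drift_le hθ hK₁ hK₂ hL b hb1 hb2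
  set c : ℝ := α * (2 : ℝ) ^ (α - 1) * Real.pi ^ (-(d : ℝ) / 2) *
    Real.Gamma ((d + α) / 2) / Real.Gamma (1 - α / 2)
  have hc : 0 < c := by
    have h1 : 0 < Real.Gamma ((d + α) / 2) := Real.Gamma_pos_of_pos (by positivity)
    have h2 : 0 < Real.Gamma (1 - α / 2) := Real.Gamma_pos_of_pos (by linarith)
    positivity
  set G : ℝ := ∫ z : EuclideanSpace ℝ (Fin d), levyWeight β (α + d) ‖z‖
  have hG : 0 ≤ G := integral_nonneg fun z => levyWeight_nonneg _ _ (norm_nonneg z)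
  set D : ℝ := β * N + c * (4 * G)
  have hD : 0 < D := by positivity
  refine ⟨β * k / 2, D * (2 * D / (β * k)) ^ (β - 1), by positivity, by positivity, fun x => ?_⟩
  have hW := bracket_pos x
  have hV : ((1 + ‖x‖ ^ 2) ^ (β / 2)) ^ (1 + θ / β) = bracket x ^ (β + θ) := by
    rw [rpow_half_eq_bracket_rpow, ← Real.rpow_mul hW.le]
    congr 1
    field_simp
  have hI := mul_le_mul_of_nonneg_left (hle x) hc.le
  have hb' : ⟪b x, (β * (1 + ‖x‖ ^ 2) ^ ((β - 2) / 2)) • x⟫ ≤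
      -(β * k) * bracket x ^ (β + θ) + β * N * bracket x ^ (β - 1) := by
    rw [real_inner_smul_right, rpow_half_eq_bracket_rpow, ← bracket_rpow_sub_two_mul_bracket,
      show β + θ = (β - 2) + (2 + θ) by ring, Real.rpow_add hW]
    calc β * bracket x ^ (β - 2) * ⟪b x, x⟫
        ≤ β * bracket x ^ (β - 2) * (-k * bracket x ^ (2 + θ) + N * bracket x) := by
          gcongr
          exact hdrift x
      _ = _ := by ring
  have habs := mul_rpow_sub_one_le (k := β * k) (by positivity) hD hβ1 hθ (one_le_bracket x)
  rw [hV]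
  refine (add_le_add hb' hI).trans ?_
  have : D * bracket x ^ (β - 1) = β * N * bracket x ^ (β - 1) +
      c * (4 * G * bracket x ^ (β - 1)) := by ring
  linarith
end

section
/- Let γ, C₁, C₂ > 0. There exists a constant C > 0, depending only on γ, C₁, C₂, such that for every differentiable function g : [0,∞) → [1,∞) satisfying g'(t) ≤ −C₁ g(t)^{1+γ} + C₂ for all t ≥ 0, one has g(t) ≤ C for all t ≥ 1. In particular the bound holds uniformly in the initial value g(0). -/
/-- A function whose right derivative is negative whenever it takes the value `C` stays below `C`
once it is below `C`. -/
theorem le_of_le_of_hasDerivWithinAt_neg {g g' : ℝ → ℝ} {a b C : ℝ} (hab : a ≤ b)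
    (hd : ∀ x ∈ Set.Icc a b, HasDerivWithinAt g (g' x) (Set.Ici a) x)
    (hneg : ∀ x ∈ Set.Ico a b, g x = C → g' x < 0) (ha : g a ≤ C) : g b ≤ C := by
  refine image_le_of_deriv_right_lt_deriv_boundary' (f' := g') (B := fun _ => C)
    (B' := fun _ => 0) (fun x hx => ((hd x hx).continuousWithinAt).mono Set.Icc_subset_Ici_self)
    (fun x hx => (hd x (Set.Ico_subset_Icc_self hx)).mono (Set.Ici_subset_Ici.2 hx.1)) ha
    continuousOn_const (fun x _ => hasDerivWithinAt_const x _ C) hneg ⟨hab, le_rfl⟩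

/-- If `g > 0` satisfies `g' ≤ -k g ^ (1 + γ)` on `(0, b)`, then `γ k b < g(b) ^ (-γ)`. -/
theorem mul_lt_rpow_neg_of_deriv_le {g g' : ℝ → ℝ} {b k γ : ℝ} (hb : 0 < b) (hγ : 0 < γ)
    (hpos : ∀ x ∈ Set.Icc 0 b, 0 < g x) (hc : ContinuousOn g (Set.Icc 0 b))
    (hd : ∀ x ∈ Set.Ioo 0 b, HasDerivAt g (g' x) x)
    (hle : ∀ x ∈ Set.Ioo 0 b, g' x ≤ -k * g x ^ (1 + γ)) :
    γ * k * b < g b ^ (-γ) := by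
  obtain ⟨c, hcm, hslope⟩ := exists_hasDerivAt_eq_slope (fun x => g x ^ (-γ))
    (fun x => g' x * (-γ) * g x ^ (-γ - 1)) hb
    (hc.rpow_const fun x hx => Or.inl (hpos x hx).ne')
    (fun x hx => (hd x hx).rpow_const (Or.inl (hpos x (Set.Ioo_subset_Icc_self hx)).ne'))
  have hgc : 0 < g c := hpos c (Set.Ioo_subset_Icc_self hcm)
  have hcancel : g c ^ (1 + γ) * g c ^ (-γ - 1) = 1 := by
    rw [← Real.rpow_add hgc, show 1 + γ + (-γ - 1) = 0 by ring, Real.rpow_zero]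
  have hbound : γ * k ≤ g' c * (-γ) * g c ^ (-γ - 1) := by
    have hmul : g' c * g c ^ (-γ - 1) ≤ -k * g c ^ (1 + γ) * g c ^ (-γ - 1) :=
      mul_le_mul_of_nonneg_right (hle c hcm) (Real.rpow_nonneg hgc.le _)
    rw [mul_assoc (-k), hcancel] at hmul
    nlinarith
  have hzero : 0 < g 0 ^ (-γ) := Real.rpow_pos_of_pos (hpos 0 ⟨le_rfl, hb.le⟩) _
  rw [hslope, sub_zero, le_div_iff₀ hb] at hbound
  linarith

/-- Uniform-in-initial-condition bound: for `γ, C₁, C₂ > 0` there is `C > 0`, depending only on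
`γ, C₁, C₂`, such that every differentiable `g : [0,∞) → [1,∞)` with
`g'(t) ≤ -C₁ g(t)^{1+γ} + C₂` for all `t ≥ 0` satisfies `g(t) ≤ C` for all `t ≥ 1`. -/
theorem stmt7 (γ C₁ C₂ : ℝ) (hγ : 0 < γ) (hC₁ : 0 < C₁) (hC₂ : 0 < C₂) :
    ∃ C : ℝ, 0 < C ∧ ∀ g g' : ℝ → ℝ,
      (∀ t, 0 ≤ t → 1 ≤ g t) →
      (∀ t, 0 ≤ t → HasDerivWithinAt g (g' t) (Set.Ici 0) t) →
      (∀ t, 0 ≤ t → g' t ≤ -C₁ * g t ^ (1 + γ) + C₂) →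
      ∀ t, 1 ≤ t → g t ≤ C := by
  set C : ℝ := max 1 (max (2 * C₂ / C₁) ((2 / (γ * C₁)) ^ γ⁻¹))
  have hC_one : 1 ≤ C := le_max_left _ _
  have hC_pos : 0 < C := by linarith
  have hC_lin : 2 * C₂ ≤ C₁ * C := by
    have h : 2 * C₂ / C₁ ≤ C := (le_max_left _ _).trans (le_max_right _ _)
    rwa [div_le_iff₀' hC₁] at h
  have hC_pow : 2 / (γ * C₁) ≤ C ^ γ := by
    have h : (2 / (γ * C₁)) ^ γ⁻¹ ≤ C := (le_max_right _ _).trans (le_max_right _ _)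
    rwa [Real.rpow_inv_le_iff_of_pos (by positivity) hC_pos.le hγ] at h
  refine ⟨C, hC_pos, fun g g' hg hd hle t ht => ?_⟩
  have hdecay : ∀ s, 0 ≤ s → C ≤ g s → g' s ≤ -(C₁ / 2) * g s ^ (1 + γ) := by
    intro s hs hCs
    have hself : g s ≤ g s ^ (1 + γ) := Real.self_le_rpow_of_one_le (hg s hs) (by linarith)
    have hmul : C₁ * C ≤ C₁ * g s ^ (1 + γ) :=
      mul_le_mul_of_nonneg_left (hCs.trans hself) hC₁.le
    linarith [hle s hs]
  by_contra! hgt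
  have habove : ∀ s ∈ Set.Icc 0 t, C < g s := by
    intro s hs
    by_contra! hsC
    refine hgt.not_ge (le_of_le_of_hasDerivWithinAt_neg (g' := g') hs.2
      (fun x hx => (hd x (hs.1.trans hx.1)).mono (Set.Ici_subset_Ici.2 hs.1))
      (fun x hx hxC => (hdecay x (hs.1.trans hx.1) hxC.ge).trans_lt ?_) hsC)
    have hpow : 0 < g x ^ (1 + γ) := Real.rpow_pos_of_pos (hxC ▸ hC_pos) _
    nlinarith
  have hlower : γ * (C₁ / 2) * t < g t ^ (-γ) :=
    mul_lt_rpow_neg_of_deriv_le (g' := g') (by linarith) hγ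
      (fun x hx => hC_pos.trans (habove x hx))
      (fun x hx => (hd x hx.1).continuousWithinAt.mono Set.Icc_subset_Ici_self)
      (fun x hx => (hd x hx.1.le).hasDerivAt (Ici_mem_nhds hx.1))
      (fun x hx => hdecay x hx.1.le (habove x (Set.Ioo_subset_Icc_self hx)).le)
  have hgt_pow : 2 / (γ * C₁) < g t ^ γ :=
    hC_pow.trans_lt (Real.rpow_lt_rpow hC_pos.le hgt hγ)
  have hinv : g t ^ (-γ) < γ * C₁ / 2 := by
    rw [Real.rpow_neg (hC_pos.trans hgt).le, ← inv_div]
    exact inv_strictAnti₀ (by positivity) hgt_pow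
  nlinarith [mul_pos hγ hC₁]
end

section
/- Let d ≥ 1 and θ ≥ 0, and define b : ℝ^d → ℝ^d by b(x) = −x|x|^θ. Then b satisfies Assumption (A) with parameter θ: there exist constants K₁, K₂, L > 0 such that ⟨b(x)−b(y), x−y⟩ ≤ K₁|x−y|² whenever |x−y| ≤ L, and ⟨b(x)−b(y), x−y⟩ ≤ −K₂|x−y|^{2+θ} whenever |x−y| > L. -/
open scoped RealInnerProductSpace

/-- The power of half the distance is controlled by the powers of the two norms. -/
theorem half_norm_sub_rpow_le {E : Type*} [SeminormedAddCommGroup E] {θ : ℝ} (hθ : 0 ≤ θ)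
    (x y : E) : (‖x - y‖ / 2) ^ θ ≤ ‖x‖ ^ θ + ‖y‖ ^ θ := by
  have htri := norm_sub_le x y
  have hx := Real.rpow_nonneg (norm_nonneg x) θ
  have hy := Real.rpow_nonneg (norm_nonneg y) θ
  rcases le_total ‖x‖ ‖y‖ with h | h
  · have := Real.rpow_le_rpow (by positivity) (show ‖x - y‖ / 2 ≤ ‖y‖ by linarith) hθ
    linarith
  · have := Real.rpow_le_rpow (by positivity) (show ‖x - y‖ / 2 ≤ ‖x‖ by linarith) hθ
    linarith

/-- Strong monotonicity of the map `x ↦ ‖x‖ ^ θ • x` on an inner product space. -/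
theorem norm_sub_rpow_le_inner_rpow_smul_sub {E : Type*} [NormedAddCommGroup E]
    [InnerProductSpace ℝ E] {θ : ℝ} (hθ : 0 ≤ θ) (x y : E) :
    (1 / 2) ^ (θ + 1) * ‖x - y‖ ^ (2 + θ) ≤ ⟪‖x‖ ^ θ • x - ‖y‖ ^ θ • y, x - y⟫ := by
  have hinner : ⟪‖x‖ ^ θ • x - ‖y‖ ^ θ • y, x - y⟫ =
      (‖x‖ ^ θ + ‖y‖ ^ θ) / 2 * ‖x - y‖ ^ 2 +
        (‖x‖ ^ θ - ‖y‖ ^ θ) * (‖x‖ ^ 2 - ‖y‖ ^ 2) / 2 := by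
    rw [norm_sub_sq_real]
    simp only [inner_sub_left, inner_sub_right, real_inner_smul_left,
      real_inner_self_eq_norm_sq, real_inner_comm x y]
    ring
  have hmono : 0 ≤ (‖x‖ ^ θ - ‖y‖ ^ θ) * (‖x‖ ^ 2 - ‖y‖ ^ 2) := by
    rcases le_total ‖x‖ ‖y‖ with h | h
    · exact mul_nonneg_of_nonpos_of_nonpos
        (sub_nonpos.2 (Real.rpow_le_rpow (norm_nonneg x) h hθ))
        (sub_nonpos.2 (pow_le_pow_left₀ (norm_nonneg x) h 2))
    · exact mul_nonneg
        (sub_nonneg.2 (Real.rpow_le_rpow (norm_nonneg y) h hθ))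
        (sub_nonneg.2 (pow_le_pow_left₀ (norm_nonneg y) h 2))
  have hpow : (1 / 2) ^ (θ + 1) * ‖x - y‖ ^ (2 + θ) =
      (‖x - y‖ / 2) ^ θ / 2 * ‖x - y‖ ^ 2 := by
    rw [Real.rpow_add (by norm_num), Real.rpow_one,
      Real.rpow_add_of_nonneg (norm_nonneg _) zero_le_two hθ, Real.rpow_two,
      div_eq_mul_one_div ‖x - y‖ 2, Real.mul_rpow (norm_nonneg _) (by norm_num)]
    ring
  rw [hpow, hinner]
  have := mul_le_mul_of_nonneg_right (half_norm_sub_rpow_le hθ x y) (sq_nonneg ‖x - y‖)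
  linarith

/-- The drift `b(x) = -x|x|^θ` on `ℝ^d` satisfies Assumption (A) with parameter `θ ≥ 0`:
there exist `K₁, K₂, L > 0` with `⟨b(x)-b(y), x-y⟩ ≤ K₁|x-y|²` whenever `|x-y| ≤ L`, and
`⟨b(x)-b(y), x-y⟩ ≤ -K₂|x-y|^{2+θ}` whenever `|x-y| > L`. -/
theorem stmt10 (d : ℕ) (hd : 1 ≤ d) (θ : ℝ) (hθ : 0 ≤ θ) :
    ∃ K₁ K₂ L : ℝ, 0 < K₁ ∧ 0 < K₂ ∧ 0 < L ∧
      (∀ x y : EuclideanSpace ℝ (Fin d), ‖x - y‖ ≤ L →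
        ⟪(-(‖x‖ ^ θ) • x) - (-(‖y‖ ^ θ) • y), x - y⟫ ≤ K₁ * ‖x - y‖ ^ 2) ∧
      (∀ x y : EuclideanSpace ℝ (Fin d), L < ‖x - y‖ →
        ⟪(-(‖x‖ ^ θ) • x) - (-(‖y‖ ^ θ) • y), x - y⟫ ≤ -K₂ * ‖x - y‖ ^ (2 + θ)) := by
  have hneg (x y : EuclideanSpace ℝ (Fin d)) :
      ⟪(-(‖x‖ ^ θ) • x) - (-(‖y‖ ^ θ) • y), x - y⟫ ≤
        -(1 / 2) ^ (θ + 1) * ‖x - y‖ ^ (2 + θ) := by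
    have hb : (-(‖x‖ ^ θ) • x) - (-(‖y‖ ^ θ) • y) = -(‖x‖ ^ θ • x - ‖y‖ ^ θ • y) := by
      module
    rw [hb, inner_neg_left, neg_mul]
    exact neg_le_neg (norm_sub_rpow_le_inner_rpow_smul_sub hθ x y)
  refine ⟨1, (1 / 2) ^ (θ + 1), 1, one_pos, by positivity, one_pos, fun x y _ => ?_,
    fun x y _ => hneg x y⟩
  have hnonneg : 0 ≤ (1 / 2 : ℝ) ^ (θ + 1) * ‖x - y‖ ^ (2 + θ) := by positivity
  linarith [hneg x y, sq_nonneg ‖x - y‖]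
end

section
/- Let d ≥ 1, α ∈ (1,2), and 0 < β < α/2. Let f : ℝ^d → ℝ be continuously differentiable, and suppose there is a constant C₀ > 0 such that |f(x)| ≤ C₀(1+|x|²)^{β/2} and |∇f(x)| ≤ C₀(1+|x|²)^{β/2} for all x ∈ ℝ^d. Then there exists a constant C > 0 such that for every x ∈ ℝ^d, ∫_{ℝ^d∖{0}} [f(x+z) − f(x)]² C_{d,α} |z|^{−(α+d)} dz ≤ C (1 + |x|^{2β}), the integral being finite. -/
open MeasureTheory

/-- A power of the Japanese bracket `1 + ‖x‖²` is submultiplicative up to a factor `2`. -/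
lemma one_add_norm_add_sq_rpow_le {E : Type*} [NormedAddCommGroup E] {β : ℝ} (hβ0 : 0 ≤ β)
    (hβ1 : β ≤ 1) (x w : E) :
    (1 + ‖x + w‖ ^ 2) ^ β ≤ 2 * (1 + ‖x‖ ^ 2) ^ β * (1 + ‖w‖ ^ 2) ^ β := by
  have hbase : 1 + ‖x + w‖ ^ 2 ≤ 2 * (1 + ‖x‖ ^ 2) * (1 + ‖w‖ ^ 2) := by
    have h1 : ‖x + w‖ ^ 2 ≤ (‖x‖ + ‖w‖) ^ 2 := by gcongr; exact norm_add_le x w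
    nlinarith [sq_nonneg (‖x‖ - ‖w‖), mul_nonneg (sq_nonneg ‖x‖) (sq_nonneg ‖w‖)]
  have h2 : (2 : ℝ) ^ β ≤ 2 := by
    simpa using Real.rpow_le_rpow_of_exponent_le (by norm_num : (1 : ℝ) ≤ 2) hβ1
  calc (1 + ‖x + w‖ ^ 2) ^ β ≤ (2 * (1 + ‖x‖ ^ 2) * (1 + ‖w‖ ^ 2)) ^ β :=
        Real.rpow_le_rpow (by positivity) hbase hβ0
    _ = 2 ^ β * (1 + ‖x‖ ^ 2) ^ β * (1 + ‖w‖ ^ 2) ^ β := by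
        rw [Real.mul_rpow (by positivity) (by positivity),
          Real.mul_rpow (by positivity) (by positivity)]
    _ ≤ 2 * (1 + ‖x‖ ^ 2) ^ β * (1 + ‖w‖ ^ 2) ^ β := by gcongr

lemma one_add_sq_rpow_le {β r : ℝ} (hβ0 : 0 ≤ β) (hβ1 : β ≤ 1) (hr : 0 ≤ r) :
    (1 + r ^ 2) ^ β ≤ 1 + r ^ (2 * β) := by
  have h := Real.rpow_add_le_add_rpow zero_le_one (sq_nonneg r) hβ0 hβ1
  rwa [Real.one_rpow, ← Real.rpow_natCast_mul hr] at h

lemma one_add_sq_rpow_le_two {β r : ℝ} (hβ0 : 0 ≤ β) (hβ1 : β ≤ 1) (hr : 0 ≤ r) (hr1 : r ≤ 1) :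
    (1 + r ^ 2) ^ β ≤ 2 := by
  have h := Real.rpow_le_one hr hr1 (by positivity : 0 ≤ 2 * β)
  linarith [one_add_sq_rpow_le hβ0 hβ1 hr]

lemma one_add_sq_rpow_half_sq {β r : ℝ} : ((1 + r ^ 2) ^ (β / 2)) ^ 2 = (1 + r ^ 2) ^ β := by
  rw [← Real.rpow_mul_natCast (by positivity)]
  congr 1
  push_cast
  ring

/-- The radial function equal to `‖z‖ ^ a` on the unit ball and to `‖z‖ ^ b` outside it is
integrable when `b < -dim E < a`. -/
lemma integrable_ite_norm_rpow {E : Type*} [NormedAddCommGroup E] [NormedSpace ℝ E]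
    [FiniteDimensional ℝ E] [Nontrivial E] [MeasurableSpace E] [BorelSpace E]
    (μ : Measure E) [μ.IsAddHaarMeasure] {a b : ℝ}
    (ha : -(Module.finrank ℝ E : ℝ) < a) (hb : b < -(Module.finrank ℝ E : ℝ)) :
    Integrable (fun z : E => if ‖z‖ < 1 then ‖z‖ ^ a else ‖z‖ ^ b) μ := by
  have hdim : 1 ≤ Module.finrank ℝ E := Module.finrank_pos
  have hmul {r : ℝ} (hr : 0 < r) (c : ℝ) :
      r ^ (Module.finrank ℝ E - 1) • r ^ c = r ^ ((Module.finrank ℝ E : ℝ) - 1 + c) := by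
    rw [smul_eq_mul, Real.rpow_add hr, ← Real.rpow_natCast, Nat.cast_sub hdim, Nat.cast_one]
  refine (integrable_fun_norm_addHaar μ (f := fun r : ℝ => if r < 1 then r ^ a else r ^ b)).2 ?_
  rw [← Set.Ioo_union_Ici_eq_Ioi zero_lt_one]
  refine IntegrableOn.union ?_ ?_
  · refine ((intervalIntegral.integrableOn_Ioo_rpow_iff zero_lt_one).2
      (by linarith : -1 < (Module.finrank ℝ E : ℝ) - 1 + a)).congr_fun ?_ measurableSet_Ioo
    intro r hr
    simp only [if_pos hr.2, hmul hr.1]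
  · refine ((integrableOn_Ici_iff_integrableOn_Ioi (by finiteness)).2 (integrableOn_Ioi_rpow_of_lt
      (by linarith : (Module.finrank ℝ E : ℝ) - 1 + b < -1) zero_lt_one)).congr_fun ?_
      measurableSet_Ici
    intro r hr
    have hr1 : (1 : ℝ) ≤ r := hr
    simp only [if_neg (not_lt.2 hr1), hmul (zero_lt_one.trans_le hr1)]

/-- A gradient bound of order `β` controls the increments of `f` along vectors of norm at
most `1`. -/
lemma sq_sub_le_of_norm_gradient_le {E : Type*} [NormedAddCommGroup E]
    [InnerProductSpace ℝ E] [CompleteSpace E] {β C₀ : ℝ} {f : E → ℝ} (hβ0 : 0 ≤ β) (hβ1 : β ≤ 1)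
    (hC₀ : 0 ≤ C₀) (hf : Differentiable ℝ f)
    (hgb : ∀ x, ‖gradient f x‖ ≤ C₀ * (1 + ‖x‖ ^ 2) ^ (β / 2)) (x : E) {z : E} (hz : ‖z‖ ≤ 1) :
    (f (x + z) - f x) ^ 2 ≤ 4 * C₀ ^ 2 * (1 + ‖x‖ ^ 2) ^ β * ‖z‖ ^ 2 := by
  have hbound : ∀ y ∈ Metric.closedBall x 1,
      ‖fderiv ℝ f y‖ ≤ C₀ * (2 * (1 + ‖x‖ ^ 2) ^ (β / 2)) := by
    intro y hy
    have hw : ‖y - x‖ ≤ 1 := by rwa [← dist_eq_norm]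
    have hnorm : ‖fderiv ℝ f y‖ = ‖gradient f y‖ := by simp [gradient]
    rw [hnorm]
    refine (hgb y).trans (mul_le_mul_of_nonneg_left ?_ hC₀)
    refine le_of_sq_le_sq ?_ (by positivity)
    rw [mul_pow, one_add_sq_rpow_half_sq, one_add_sq_rpow_half_sq]
    have h := one_add_norm_add_sq_rpow_le hβ0 hβ1 x (y - x)
    rw [add_sub_cancel] at h
    have h2 := one_add_sq_rpow_le_two hβ0 hβ1 (norm_nonneg (y - x)) hw
    have h3 : 0 ≤ (1 + ‖x‖ ^ 2) ^ β := by positivity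
    nlinarith
  have hmv := (convex_closedBall x 1).norm_image_sub_le_of_norm_fderiv_le
    (fun y _ => hf y) hbound (Metric.mem_closedBall_self zero_le_one)
    (show x + z ∈ Metric.closedBall x 1 by simpa using hz)
  rw [add_sub_cancel_left, Real.norm_eq_abs] at hmv
  calc (f (x + z) - f x) ^ 2 = |f (x + z) - f x| ^ 2 := (sq_abs _).symm
    _ ≤ (C₀ * (2 * (1 + ‖x‖ ^ 2) ^ (β / 2)) * ‖z‖) ^ 2 := by gcongr
    _ = 4 * C₀ ^ 2 * ((1 + ‖x‖ ^ 2) ^ (β / 2)) ^ 2 * ‖z‖ ^ 2 := by ring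
    _ = 4 * C₀ ^ 2 * (1 + ‖x‖ ^ 2) ^ β * ‖z‖ ^ 2 := by rw [one_add_sq_rpow_half_sq]

/-- A growth bound of order `β` controls the increments of `f` along vectors of norm at
least `1`. -/
lemma sq_sub_le_of_abs_le {E : Type*} [NormedAddCommGroup E] {β C₀ : ℝ} {f : E → ℝ}
    (hβ0 : 0 ≤ β) (hβ1 : β ≤ 1)
    (hfb : ∀ x, |f x| ≤ C₀ * (1 + ‖x‖ ^ 2) ^ (β / 2)) (x : E) {z : E} (hz : 1 ≤ ‖z‖) :
    (f (x + z) - f x) ^ 2 ≤ 10 * C₀ ^ 2 * (1 + ‖x‖ ^ 2) ^ β * ‖z‖ ^ (2 * β) := by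
  have hsq (y : E) : f y ^ 2 ≤ C₀ ^ 2 * (1 + ‖y‖ ^ 2) ^ β := by
    rw [← one_add_sq_rpow_half_sq, ← mul_pow, ← sq_abs]
    exact pow_le_pow_left₀ (abs_nonneg _) (hfb y) 2
  have hz1 : 1 ≤ ‖z‖ ^ (2 * β) := Real.one_le_rpow hz (by positivity)
  have hx : 0 ≤ (1 + ‖x‖ ^ 2) ^ β := by positivity
  have hxz : (1 + ‖x + z‖ ^ 2) ^ β ≤ 4 * ((1 + ‖x‖ ^ 2) ^ β * ‖z‖ ^ (2 * β)) := by
    have h1 := one_add_norm_add_sq_rpow_le hβ0 hβ1 x z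
    have h2 : (1 + ‖z‖ ^ 2) ^ β ≤ 2 * ‖z‖ ^ (2 * β) := by
      linarith [one_add_sq_rpow_le hβ0 hβ1 (norm_nonneg z)]
    nlinarith [mul_le_mul_of_nonneg_left h2 hx]
  have hxx : (1 + ‖x‖ ^ 2) ^ β ≤ (1 + ‖x‖ ^ 2) ^ β * ‖z‖ ^ (2 * β) :=
    le_mul_of_one_le_right hx hz1
  have hC := sq_nonneg C₀
  calc (f (x + z) - f x) ^ 2 ≤ 2 * (f (x + z) ^ 2 + f x ^ 2) := by
        nlinarith [sq_nonneg (f (x + z) + f x)]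
    _ ≤ 2 * (C₀ ^ 2 * (4 * ((1 + ‖x‖ ^ 2) ^ β * ‖z‖ ^ (2 * β))) +
          C₀ ^ 2 * ((1 + ‖x‖ ^ 2) ^ β * ‖z‖ ^ (2 * β))) := by
        gcongr
        · exact (hsq _).trans (mul_le_mul_of_nonneg_left hxz hC)
        · exact (hsq _).trans (mul_le_mul_of_nonneg_left hxx hC)
    _ = 10 * C₀ ^ 2 * (1 + ‖x‖ ^ 2) ^ β * ‖z‖ ^ (2 * β) := by ring

/-- Carré-du-champ bound: for `α ∈ (1,2)`, `0 < β < α/2`, and `f ∈ C¹(ℝ^d)` with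
`|f(x)| ≤ C₀(1+|x|²)^{β/2}` and `|∇f(x)| ≤ C₀(1+|x|²)^{β/2}`, there is `C > 0` such that
`∫_{ℝ^d∖{0}} [f(x+z) - f(x)]² C_{d,α} |z|^{-(α+d)} dz ≤ C(1+|x|^{2β})` for all `x`,
the integral being finite. -/
theorem stmt11 (d : ℕ) (hd : 1 ≤ d) (α β C₀ : ℝ) (hα1 : 1 < α) (hα2 : α < 2)
    (hβ0 : 0 < β) (hβ : β < α / 2) (hC₀ : 0 < C₀)
    (f : EuclideanSpace ℝ (Fin d) → ℝ) (hf : ContDiff ℝ 1 f)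
    (hfb : ∀ x, |f x| ≤ C₀ * (1 + ‖x‖ ^ 2) ^ (β / 2))
    (hgb : ∀ x, ‖gradient f x‖ ≤ C₀ * (1 + ‖x‖ ^ 2) ^ (β / 2)) :
    ∃ C : ℝ, 0 < C ∧ ∀ x : EuclideanSpace ℝ (Fin d),
      IntegrableOn
        (fun z : EuclideanSpace ℝ (Fin d) => (f (x + z) - f x) ^ 2 *
          ((α * (2 : ℝ) ^ (α - 1) * Real.pi ^ (-(d : ℝ) / 2) *
            Real.Gamma ((d + α) / 2) / Real.Gamma (1 - α / 2)) * ‖z‖ ^ (-(α + d))))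
        {z : EuclideanSpace ℝ (Fin d) | z ≠ 0} ∧
      ∫ z in {z : EuclideanSpace ℝ (Fin d) | z ≠ 0},
          (f (x + z) - f x) ^ 2 *
            ((α * (2 : ℝ) ^ (α - 1) * Real.pi ^ (-(d : ℝ) / 2) *
              Real.Gamma ((d + α) / 2) / Real.Gamma (1 - α / 2)) * ‖z‖ ^ (-(α + d)))
        ≤ C * (1 + ‖x‖ ^ (2 * β)) := by
  have hβ1 : β ≤ 1 := by linarith
  have hnear := fun x z => sq_sub_le_of_norm_gradient_le (z := z) hβ0.le hβ1 hC₀.le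
    (hf.differentiable one_ne_zero) hgb x
  have : Nonempty (Fin d) := ⟨⟨0, hd⟩⟩
  set K : ℝ := α * (2 : ℝ) ^ (α - 1) * Real.pi ^ (-(d : ℝ) / 2) *
    Real.Gamma ((d + α) / 2) / Real.Gamma (1 - α / 2)
  have hK0 : 0 ≤ K := by
    have h1 : 0 < Real.Gamma ((d + α) / 2) := Real.Gamma_pos_of_pos (by positivity)
    have h2 : 0 < Real.Gamma (1 - α / 2) := Real.Gamma_pos_of_pos (by linarith)
    positivity
  set H : EuclideanSpace ℝ (Fin d) → ℝ := fun z =>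
    if ‖z‖ < 1 then ‖z‖ ^ (2 - (α + d)) else ‖z‖ ^ (2 * β - (α + d)) with hH
  have hHint : Integrable H := by
    refine integrable_ite_norm_rpow volume ?_ ?_ <;> rw [finrank_euclideanSpace_fin] <;> linarith
  have hH0 (z) : 0 ≤ H z := by
    simp only [hH]
    split_ifs <;> positivity
  have hpt (x z : EuclideanSpace ℝ (Fin d)) (hz : z ≠ 0) :
      (f (x + z) - f x) ^ 2 * (K * ‖z‖ ^ (-(α + d))) ≤
        10 * C₀ ^ 2 * K * (1 + ‖x‖ ^ (2 * β)) * H z := by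
    have hz0 : 0 < ‖z‖ := norm_pos_iff.2 hz
    have hx := one_add_sq_rpow_le hβ0.le hβ1 (norm_nonneg x)
    have key {c : ℝ} (h : (f (x + z) - f x) ^ 2 ≤ 10 * C₀ ^ 2 * (1 + ‖x‖ ^ 2) ^ β * ‖z‖ ^ c) :
        (f (x + z) - f x) ^ 2 * (K * ‖z‖ ^ (-(α + d))) ≤
          10 * C₀ ^ 2 * K * (1 + ‖x‖ ^ (2 * β)) * ‖z‖ ^ (c - (α + d)) := by
      calc (f (x + z) - f x) ^ 2 * (K * ‖z‖ ^ (-(α + d)))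
          ≤ (10 * C₀ ^ 2 * (1 + ‖x‖ ^ (2 * β)) * ‖z‖ ^ c) * (K * ‖z‖ ^ (-(α + d))) := by
            gcongr
            exact h.trans (by gcongr)
        _ = 10 * C₀ ^ 2 * K * (1 + ‖x‖ ^ (2 * β)) * ‖z‖ ^ (c - (α + d)) := by
            rw [sub_eq_add_neg, Real.rpow_add hz0]
            ring
    simp only [hH]
    split_ifs with h1
    · refine key ((hnear x z h1.le).trans ?_)
      rw [Real.rpow_two]
      gcongr
      norm_num
    · exact key (sq_sub_le_of_abs_le hβ0.le hβ1 hfb x (not_lt.1 h1))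
  have hmeas : MeasurableSet {z : EuclideanSpace ℝ (Fin d) | z ≠ 0} :=
    (measurableSet_singleton 0).compl
  refine ⟨10 * C₀ ^ 2 * K * (∫ z, H z) + 1, ?_, fun x => ?_⟩
  · have : 0 ≤ ∫ z, H z := integral_nonneg hH0
    positivity
  have hdom : Integrable (fun z => 10 * C₀ ^ 2 * K * (1 + ‖x‖ ^ (2 * β)) * H z) :=
    hHint.const_mul _
  have hint : IntegrableOn (fun z => (f (x + z) - f x) ^ 2 * (K * ‖z‖ ^ (-(α + d))))
      {z : EuclideanSpace ℝ (Fin d) | z ≠ 0} := by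
    refine hdom.integrableOn.mono' ?_ ?_
    · have hfm : Measurable f := hf.continuous.measurable
      exact Measurable.aestronglyMeasurable (by fun_prop)
    · filter_upwards [ae_restrict_mem hmeas] with z hz
      rw [Real.norm_of_nonneg (by positivity)]
      exact hpt x z hz
  refine ⟨hint, ?_⟩
  have hx0 : 0 ≤ 1 + ‖x‖ ^ (2 * β) := by positivity
  calc ∫ z in {z : EuclideanSpace ℝ (Fin d) | z ≠ 0},
        (f (x + z) - f x) ^ 2 * (K * ‖z‖ ^ (-(α + d)))
      ≤ ∫ z in {z : EuclideanSpace ℝ (Fin d) | z ≠ 0},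
          10 * C₀ ^ 2 * K * (1 + ‖x‖ ^ (2 * β)) * H z :=
        setIntegral_mono_on hint hdom.integrableOn hmeas (hpt x)
    _ ≤ ∫ z, 10 * C₀ ^ 2 * K * (1 + ‖x‖ ^ (2 * β)) * H z :=
        setIntegral_le_integral hdom (ae_of_all _ fun z =>
          mul_nonneg (by positivity) (hH0 z))
    _ = 10 * C₀ ^ 2 * K * (1 + ‖x‖ ^ (2 * β)) * ∫ z, H z := integral_const_mul _ _
    _ ≤ (10 * C₀ ^ 2 * K * (∫ z, H z) + 1) * (1 + ‖x‖ ^ (2 * β)) := by linarith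
end

section
/- Let d ≥ 1, α ∈ (1,2), and 0 < β < α/2. Let f : ℝ^d → ℝ be continuously differentiable with |f(x)| ≤ C₀(1+|x|²)^{β/2} and |∇f(x)| ≤ C₀(1+|x|²)^{β/2} for all x ∈ ℝ^d and some constant C₀ > 0, and let μ be a probability measure on ℝ^d with ∫_{ℝ^d} |x|^{2β} μ(dx) < ∞. Then the asymptotic variance V(f) := ∫_{ℝ^d} ∫_{ℝ^d∖{0}} [f(x+z) − f(x)]² C_{d,α} |z|^{−(α+d)} dz μ(dx) is finite, and moreover V(f) ≤ C (1 + ∫ |x|^{2β} μ(dx)) for some constant C > 0 independent of μ. -/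
open MeasureTheory

/-- A `C¹` function whose values and gradient grow at most like `(1 + ‖x‖²)^{β/2}` has increments
which are Lipschitz for small steps and of order `‖z‖^β` for large ones. -/
theorem abs_sub_le_of_growth {E : Type*} [NormedAddCommGroup E] [InnerProductSpace ℝ E]
    [CompleteSpace E] {f : E → ℝ} {β C₀ : ℝ} (hβ0 : 0 < β) (hβ1 : β ≤ 1) (hC₀ : 0 < C₀)
    (hf : Differentiable ℝ f)
    (hfb : ∀ x, |f x| ≤ C₀ * (1 + ‖x‖ ^ 2) ^ (β / 2))
    (hgb : ∀ x, ‖gradient f x‖ ≤ C₀ * (1 + ‖x‖ ^ 2) ^ (β / 2)) (x z : E) :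
    |f (x + z) - f x| ≤ 4 * C₀ * (1 + ‖x‖) ^ β * min ‖z‖ (‖z‖ ^ β) := by
  have japanese_le (y : E) : (1 + ‖y‖ ^ 2) ^ (β / 2) ≤ (1 + ‖y‖) ^ β := by
    have hy := norm_nonneg y
    calc (1 + ‖y‖ ^ 2) ^ (β / 2) ≤ ((1 + ‖y‖) ^ 2) ^ (β / 2) := by gcongr; nlinarith
      _ = (1 + ‖y‖) ^ β := by
        rw [← Real.rpow_natCast, ← Real.rpow_mul (by positivity)]
        congr 1
        push_cast
        ring
  have two_rpow_le : (2 : ℝ) ^ β ≤ 2 := by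
    simpa using Real.rpow_le_rpow_of_exponent_le (by norm_num : (1 : ℝ) ≤ 2) hβ1
  have hx := norm_nonneg x
  rcases le_or_gt ‖z‖ 1 with hz | hz
  · have hmin : min ‖z‖ (‖z‖ ^ β) = ‖z‖ := by
      refine min_eq_left ?_
      simpa using Real.rpow_le_rpow_of_exponent_ge_of_imp (norm_nonneg z) hz hβ1
        (fun _ h => absurd h one_ne_zero)
    rw [hmin]
    have hderiv : ∀ y ∈ Metric.closedBall x 1,
        ‖fderiv ℝ f y‖ ≤ 4 * C₀ * (1 + ‖x‖) ^ β := by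
      intro y hy
      have hnorm : ‖fderiv ℝ f y‖ = ‖gradient f y‖ := by simp [gradient]
      have hyx : ‖y‖ ≤ ‖x‖ + 1 := by
        have := norm_sub_norm_le y x
        rw [mem_closedBall_iff_norm] at hy
        linarith
      rw [hnorm]
      calc ‖gradient f y‖ ≤ C₀ * (1 + ‖y‖) ^ β :=
            (hgb y).trans (by gcongr; exact japanese_le y)
        _ ≤ C₀ * (2 * (1 + ‖x‖)) ^ β := by gcongr; linarith
        _ = C₀ * (2 ^ β * (1 + ‖x‖) ^ β) := by
            rw [Real.mul_rpow (by norm_num) (by positivity)]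
        _ ≤ C₀ * (4 * (1 + ‖x‖) ^ β) := by gcongr; linarith
        _ = _ := by ring
    simpa using (convex_closedBall x 1).norm_image_sub_le_of_norm_fderiv_le
      (fun y _ => hf y) hderiv (Metric.mem_closedBall_self zero_le_one)
      (show x + z ∈ Metric.closedBall x 1 by simpa [mem_closedBall_iff_norm] using hz)
  · have hmin : min ‖z‖ (‖z‖ ^ β) = ‖z‖ ^ β := by
      refine min_eq_right ?_
      simpa using Real.rpow_le_rpow_of_exponent_le hz.le hβ1
    rw [hmin]
    have hone : 1 ≤ ‖z‖ ^ β := Real.one_le_rpow hz.le hβ0.le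
    have hfx : |f x| ≤ C₀ * (1 + ‖x‖) ^ β := (hfb x).trans (by gcongr; exact japanese_le x)
    have hfxz : |f (x + z)| ≤ C₀ * (2 * ((1 + ‖x‖) ^ β * ‖z‖ ^ β)) := by
      calc |f (x + z)| ≤ C₀ * (1 + ‖x + z‖) ^ β :=
            (hfb _).trans (by gcongr; exact japanese_le _)
        _ ≤ C₀ * (2 * ((1 + ‖x‖) * ‖z‖)) ^ β := by
            gcongr
            nlinarith [norm_add_le x z]
        _ = C₀ * (2 ^ β * ((1 + ‖x‖) ^ β * ‖z‖ ^ β)) := by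
            rw [Real.mul_rpow (by norm_num) (by positivity),
              Real.mul_rpow (by positivity) (by positivity)]
        _ ≤ _ := by gcongr
    have hpos : 0 ≤ C₀ * (1 + ‖x‖) ^ β := by positivity
    calc |f (x + z) - f x| ≤ |f (x + z)| + |f x| := abs_sub _ _
      _ ≤ 4 * C₀ * (1 + ‖x‖) ^ β * ‖z‖ ^ β := by nlinarith

/-- The function `min(‖z‖, ‖z‖^β)²` is integrable against the `α`-stable Lévy density. -/
theorem integrable_min_sq_mul_norm_rpow {d : ℕ} (hd : 1 ≤ d) {α β : ℝ} (hα2 : α < 2)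
    (hβ : β < α / 2) :
    Integrable (fun z : EuclideanSpace ℝ (Fin d) =>
      min ‖z‖ (‖z‖ ^ β) ^ 2 * ‖z‖ ^ (-(α + d))) := by
  have : Nontrivial (EuclideanSpace ℝ (Fin d)) := by
    have : Nonempty (Fin d) := ⟨⟨0, hd⟩⟩
    infer_instance
  refine (integrable_fun_norm_addHaar volume
    (f := fun r : ℝ => min r (r ^ β) ^ 2 * r ^ (-(α + d)))).2 ?_
  rw [finrank_euclideanSpace_fin]
  have hmeas : Measurable
      (fun r : ℝ => r ^ (d - 1) • (min r (r ^ β) ^ 2 * r ^ (-(α + d)))) := by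
    fun_prop
  have key {r s : ℝ} (hr : 0 < r) : r ^ (d - 1) * ((r ^ s) ^ 2 * r ^ (-(α + d))) =
      r ^ (2 * s - α - 1) := by
    rw [← Real.rpow_natCast r (d - 1), ← Real.rpow_natCast (r ^ s) 2, ← Real.rpow_mul hr.le,
      ← Real.rpow_add hr, ← Real.rpow_add hr, Nat.cast_sub hd]
    congr 1
    push_cast
    ring
  rw [← Set.Ioc_union_Ioi_eq_Ioi zero_le_one]
  refine IntegrableOn.union ?_ ?_
  · have hint : IntegrableOn (fun r : ℝ => r ^ (2 * 1 - α - 1)) (Set.Ioc 0 1) := by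
      rw [← intervalIntegrable_iff_integrableOn_Ioc_of_le zero_le_one]
      exact intervalIntegral.intervalIntegrable_rpow' (by linarith)
    refine hint.mono' hmeas.aestronglyMeasurable ?_
    filter_upwards [ae_restrict_mem measurableSet_Ioc] with r hr
    have hr0 : 0 < r := hr.1
    rw [← key hr0, Real.rpow_one, Real.norm_of_nonneg (by positivity), smul_eq_mul]
    gcongr
    exact min_le_left _ _
  · have hint : IntegrableOn (fun r : ℝ => r ^ (2 * β - α - 1)) (Set.Ioi 1) :=
      integrableOn_Ioi_rpow_of_lt (by linarith) one_pos
    refine hint.mono' hmeas.aestronglyMeasurable ?_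
    filter_upwards [ae_restrict_mem measurableSet_Ioi] with r hr
    have hr0 : 0 < r := one_pos.trans hr
    rw [← key hr0, Real.norm_of_nonneg (by positivity), smul_eq_mul]
    gcongr
    exact min_le_right _ _

/-- Finiteness of the asymptotic variance: for `α ∈ (1,2)`, `0 < β < α/2`, and `f ∈ C¹(ℝ^d)`
with `|f(x)| ≤ C₀(1+|x|²)^{β/2}` and `|∇f(x)| ≤ C₀(1+|x|²)^{β/2}`, there is `C > 0`,
independent of `μ`, such that for every probability measure `μ` on `ℝ^d` with
`∫ |x|^{2β} μ(dx) < ∞`, the variance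
`V(f) = ∫∫ [f(x+z)-f(x)]² C_{d,α} |z|^{-(α+d)} dz μ(dx)` is finite and
`V(f) ≤ C (1 + ∫ |x|^{2β} μ(dx))`. -/
theorem stmt12 (d : ℕ) (hd : 1 ≤ d) (α β C₀ : ℝ) (hα1 : 1 < α) (hα2 : α < 2)
    (hβ0 : 0 < β) (hβ : β < α / 2) (hC₀ : 0 < C₀)
    (f : EuclideanSpace ℝ (Fin d) → ℝ) (hf : ContDiff ℝ 1 f)
    (hfb : ∀ x, |f x| ≤ C₀ * (1 + ‖x‖ ^ 2) ^ (β / 2))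
    (hgb : ∀ x, ‖gradient f x‖ ≤ C₀ * (1 + ‖x‖ ^ 2) ^ (β / 2)) :
    ∃ C : ℝ, 0 < C ∧ ∀ (μ : Measure (EuclideanSpace ℝ (Fin d))), IsProbabilityMeasure μ →
      Integrable (fun x : EuclideanSpace ℝ (Fin d) => ‖x‖ ^ (2 * β)) μ →
      (∀ x : EuclideanSpace ℝ (Fin d),
        IntegrableOn
          (fun z : EuclideanSpace ℝ (Fin d) => (f (x + z) - f x) ^ 2 *
            ((α * (2 : ℝ) ^ (α - 1) * Real.pi ^ (-(d : ℝ) / 2) *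
              Real.Gamma ((d + α) / 2) / Real.Gamma (1 - α / 2)) * ‖z‖ ^ (-(α + d))))
          {z : EuclideanSpace ℝ (Fin d) | z ≠ 0}) ∧
      Integrable (fun x : EuclideanSpace ℝ (Fin d) =>
        ∫ z in {z : EuclideanSpace ℝ (Fin d) | z ≠ 0},
          (f (x + z) - f x) ^ 2 *
            ((α * (2 : ℝ) ^ (α - 1) * Real.pi ^ (-(d : ℝ) / 2) *
              Real.Gamma ((d + α) / 2) / Real.Gamma (1 - α / 2)) * ‖z‖ ^ (-(α + d)))) μ ∧
      ∫ x, (∫ z in {z : EuclideanSpace ℝ (Fin d) | z ≠ 0},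
          (f (x + z) - f x) ^ 2 *
            ((α * (2 : ℝ) ^ (α - 1) * Real.pi ^ (-(d : ℝ) / 2) *
              Real.Gamma ((d + α) / 2) / Real.Gamma (1 - α / 2)) * ‖z‖ ^ (-(α + d)))) ∂μ
        ≤ C * (1 + ∫ x, ‖x‖ ^ (2 * β) ∂μ) := by
  generalize α * (2 : ℝ) ^ (α - 1) * Real.pi ^ (-(d : ℝ) / 2) *
    Real.Gamma ((d + α) / 2) / Real.Gamma (1 - α / 2) = c
  set D : EuclideanSpace ℝ (Fin d) → ℝ :=
    fun z => min ‖z‖ (‖z‖ ^ β) ^ 2 * ‖z‖ ^ (-(α + d)) with hD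
  have hDint : Integrable D := integrable_min_sq_mul_norm_rpow hd hα2 hβ
  have hDnonneg : 0 ≤ ∫ z in {z | z ≠ 0}, D z := integral_nonneg fun z => by positivity
  have hbound (x z : EuclideanSpace ℝ (Fin d)) :
      ‖(f (x + z) - f x) ^ 2 * (c * ‖z‖ ^ (-(α + d)))‖ ≤
        64 * C₀ ^ 2 * |c| * (1 + ‖x‖ ^ (2 * β)) * D z := by
    have hsq : ((1 + ‖x‖) ^ β) ^ 2 ≤ 4 * (1 + ‖x‖ ^ (2 * β)) := by
      have hrpow {t : ℝ} (ht : 0 ≤ t) : (t ^ β) ^ 2 = t ^ (2 * β) := by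
        rw [← Real.rpow_natCast, ← Real.rpow_mul ht]
        congr 1
        push_cast
        ring
      have hx := norm_nonneg x
      have htwo : (2 : ℝ) ^ (2 * β) ≤ 4 := by
        calc (2 : ℝ) ^ (2 * β) ≤ 2 ^ (2 : ℝ) :=
              Real.rpow_le_rpow_of_exponent_le (by norm_num) (by linarith)
          _ = 4 := by norm_num
      have hpos : 0 ≤ ‖x‖ ^ (2 * β) := by positivity
      rw [hrpow (by positivity)]
      rcases le_total ‖x‖ 1 with h | h
      · calc (1 + ‖x‖) ^ (2 * β) ≤ 2 ^ (2 * β) := by gcongr; linarith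
          _ ≤ _ := by linarith
      · calc (1 + ‖x‖) ^ (2 * β) ≤ (2 * ‖x‖) ^ (2 * β) := by gcongr; linarith
          _ = 2 ^ (2 * β) * ‖x‖ ^ (2 * β) := Real.mul_rpow (by norm_num) hx
          _ ≤ 4 * ‖x‖ ^ (2 * β) := by gcongr
          _ ≤ _ := by linarith
    have hinc := abs_sub_le_of_growth hβ0 (by linarith) hC₀ (hf.differentiable one_ne_zero)
      hfb hgb x z
    have hker : 0 ≤ ‖z‖ ^ (-(α + d)) := by positivity
    rw [norm_mul, norm_mul, norm_pow, Real.norm_eq_abs, Real.norm_eq_abs,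
      Real.norm_of_nonneg hker]
    calc |f (x + z) - f x| ^ 2 * (|c| * ‖z‖ ^ (-(α + d)))
        ≤ (4 * C₀ * (1 + ‖x‖) ^ β * min ‖z‖ (‖z‖ ^ β)) ^ 2 * (|c| * ‖z‖ ^ (-(α + d))) := by
          gcongr
      _ = 16 * C₀ ^ 2 * |c| * ((1 + ‖x‖) ^ β) ^ 2 * D z := by rw [hD]; ring
      _ ≤ 16 * C₀ ^ 2 * |c| * (4 * (1 + ‖x‖ ^ (2 * β))) * D z := by gcongr
      _ = _ := by ring
  have hmeas : Measurable fun p : EuclideanSpace ℝ (Fin d) × EuclideanSpace ℝ (Fin d) =>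
      (f (p.1 + p.2) - f p.1) ^ 2 * (c * ‖p.2‖ ^ (-(α + d))) := by
    have := hf.continuous.measurable
    fun_prop
  set A : ℝ := 64 * C₀ ^ 2 * |c| * ∫ z in {z | z ≠ 0}, D z with hA
  have hA0 : 0 ≤ A := by positivity
  refine ⟨A + 1, by linarith, fun μ hμ hμint => ?_⟩
  have hinner (x : EuclideanSpace ℝ (Fin d)) :
      ‖∫ z in {z | z ≠ 0}, (f (x + z) - f x) ^ 2 * (c * ‖z‖ ^ (-(α + d)))‖ ≤
        A * (1 + ‖x‖ ^ (2 * β)) := by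
    calc _ ≤ ∫ z in {z | z ≠ 0}, 64 * C₀ ^ 2 * |c| * (1 + ‖x‖ ^ (2 * β)) * D z :=
          norm_integral_le_of_norm_le (hDint.integrableOn.const_mul _)
            (Filter.Eventually.of_forall (hbound x))
      _ = A * (1 + ‖x‖ ^ (2 * β)) := by rw [integral_const_mul, hA]; ring
  have hdom : Integrable (fun x => A * (1 + ‖x‖ ^ (2 * β))) μ :=
    ((integrable_const 1).add hμint).const_mul A
  have hVint := hdom.mono'
    (StronglyMeasurable.integral_prod_right (ν := volume.restrict {z | z ≠ 0})
      hmeas.stronglyMeasurable).aestronglyMeasurable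
    (Filter.Eventually.of_forall hinner)
  refine ⟨fun x => (hDint.integrableOn.const_mul _).mono'
    (hmeas.comp measurable_prodMk_left).aestronglyMeasurable
    (Filter.Eventually.of_forall (hbound x)), hVint, ?_⟩
  have hmoment : 0 ≤ ∫ x, ‖x‖ ^ (2 * β) ∂μ := integral_nonneg fun x => by positivity
  calc _ ≤ ∫ x, A * (1 + ‖x‖ ^ (2 * β)) ∂μ :=
        integral_mono hVint hdom fun x => (le_abs_self _).trans (hinner x)
    _ = A * (1 + ∫ x, ‖x‖ ^ (2 * β) ∂μ) := by
        rw [integral_const_mul, integral_add (integrable_const 1) hμint]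
        simp
    _ ≤ (A + 1) * (1 + ∫ x, ‖x‖ ^ (2 * β) ∂μ) := by gcongr; linarith
end

section
/- Let d ≥ 1, α ∈ (1,2), and 0 < β < α/4. Let f : ℝ^d → ℝ be continuously differentiable, and suppose there is a constant C₀ > 0 such that |f(x)| ≤ C₀(1+|x|²)^{β/2} and |∇f(x)| ≤ C₀(1+|x|²)^{β/2} for all x ∈ ℝ^d. Then there exists a constant C > 0 such that for every x ∈ ℝ^d, ∫_{ℝ^d∖{0}} [f(x+z) − f(x)]⁴ C_{d,α} |z|^{−(α+d)} dz ≤ C (1 + |x|^{4β}), the integral being finite. -/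
open MeasureTheory

/-- The weight `(1 + t²)^(β/2)` is at most `1 + t^β` for `0 ≤ t` and small exponents. -/
lemma one_add_sq_rpow_half_le {t β : ℝ} (ht : 0 ≤ t) (hβ0 : 0 ≤ β) (hβ1 : β ≤ 2) :
    (1 + t ^ 2) ^ (β / 2) ≤ 1 + t ^ β := by
  have h := Real.rpow_add_le_add_rpow zero_le_one (sq_nonneg t) (by positivity : 0 ≤ β / 2)
    (by linarith)
  have h2 : (t ^ 2) ^ (β / 2) = t ^ β := by
    rw [← Real.rpow_natCast, ← Real.rpow_mul ht]
    congr 1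
    push_cast
    ring
  rwa [Real.one_rpow, h2] at h

/-- The radial function `‖z‖^(a - d)` near the origin and `‖z‖^(b - d)` far from it is integrable
on a `d`-dimensional space when `0 < a` and `b < 0`. -/
lemma integrable_piecewise_norm_rpow {d : ℕ} (hd : 1 ≤ d) {a b : ℝ} (ha : 0 < a) (hb : b < 0) :
    Integrable fun z : EuclideanSpace ℝ (Fin d) =>
      if ‖z‖ ≤ 1 then ‖z‖ ^ (a - d) else ‖z‖ ^ (b - d) := by
  have : NeZero d := ⟨by omega⟩
  have key := integrable_fun_norm_addHaar (volume : Measure (EuclideanSpace ℝ (Fin d)))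
    (f := fun t : ℝ => if t ≤ 1 then t ^ (a - d) else t ^ (b - d))
  refine key.2 ?_
  have hpow : ∀ (c t : ℝ), 0 < t → t ^ (d - 1) • t ^ (c - d) = t ^ (c - 1) := by
    intro c t ht
    rw [smul_eq_mul, ← Real.rpow_natCast, ← Real.rpow_add ht, Nat.cast_sub hd]
    congr 1
    push_cast
    ring
  rw [finrank_euclideanSpace_fin, ← Set.Ioc_union_Ioi_eq_Ioi zero_le_one]
  refine IntegrableOn.union ?_ ?_
  · have h := (intervalIntegrable_iff_integrableOn_Ioc_of_le zero_le_one).1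
      (intervalIntegral.intervalIntegrable_rpow' (a := 0) (b := 1) (by linarith : -1 < a - 1))
    refine h.congr_fun (fun t ht => ?_) measurableSet_Ioc
    simp only [if_pos ht.2, hpow a t ht.1]
  · have h := integrableOn_Ioi_rpow_of_lt (by linarith : b - 1 < -1) zero_lt_one
    refine h.congr_fun (fun t ht => ?_) measurableSet_Ioi
    have ht : 1 < t := ht
    simp only [if_neg (not_le.2 ht), hpow b t (by linarith)]

/-- Growth bound for long increments. -/
lemma abs_sub_le_of_abs_le {E : Type*} [SeminormedAddCommGroup E] {f : E → ℝ} {β C₀ : ℝ}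
    (hβ0 : 0 ≤ β) (hβ1 : β ≤ 1) (hC₀ : 0 ≤ C₀)
    (hfb : ∀ x, |f x| ≤ C₀ * (1 + ‖x‖ ^ 2) ^ (β / 2)) (x : E) {z : E} (hz : 1 ≤ ‖z‖) :
    |f (x + z) - f x| ≤ 2 * (C₀ * (2 + ‖x‖ ^ β)) * ‖z‖ ^ β := by
  have hw : ∀ y, |f y| ≤ C₀ * (1 + ‖y‖ ^ β) := fun y => (hfb y).trans
    (mul_le_mul_of_nonneg_left
      (one_add_sq_rpow_half_le (norm_nonneg y) hβ0 (by linarith)) hC₀)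
  have hxz : ‖x + z‖ ^ β ≤ ‖x‖ ^ β + ‖z‖ ^ β :=
    (Real.rpow_le_rpow (norm_nonneg _) (norm_add_le x z) hβ0).trans
      (Real.rpow_add_le_add_rpow (norm_nonneg x) (norm_nonneg z) hβ0 hβ1)
  have ha : 0 ≤ ‖x‖ ^ β := by positivity
  have hb : 1 ≤ ‖z‖ ^ β := Real.one_le_rpow hz hβ0
  calc |f (x + z) - f x| ≤ |f (x + z)| + |f x| := abs_sub _ _
    _ ≤ C₀ * (1 + ‖x + z‖ ^ β) + C₀ * (1 + ‖x‖ ^ β) := add_le_add (hw _) (hw _)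
    _ = C₀ * (2 + ‖x + z‖ ^ β + ‖x‖ ^ β) := by ring
    _ ≤ C₀ * (2 * (2 + ‖x‖ ^ β) * ‖z‖ ^ β) := by
        gcongr
        nlinarith [mul_nonneg ha (sub_nonneg.2 hb)]
    _ = 2 * (C₀ * (2 + ‖x‖ ^ β)) * ‖z‖ ^ β := by ring

section Increment

variable {E : Type*} [NormedAddCommGroup E] [InnerProductSpace ℝ E] [CompleteSpace E]
  {f : E → ℝ} {β C₀ : ℝ}

/-- Lipschitz bound for short increments, from growth of the gradient. -/
lemma abs_sub_le_of_norm_gradient_le (hβ0 : 0 ≤ β) (hβ1 : β ≤ 1) (hC₀ : 0 ≤ C₀)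
    (hf : Differentiable ℝ f)
    (hgb : ∀ x, ‖gradient f x‖ ≤ C₀ * (1 + ‖x‖ ^ 2) ^ (β / 2)) (x : E) {z : E} (hz : ‖z‖ ≤ 1) :
    |f (x + z) - f x| ≤ C₀ * (2 + ‖x‖ ^ β) * ‖z‖ := by
  have hbound : ∀ y ∈ Metric.closedBall x 1, ‖fderiv ℝ f y‖ ≤ C₀ * (2 + ‖x‖ ^ β) := by
    intro y hy
    have hg : ‖fderiv ℝ f y‖ = ‖gradient f y‖ := by
      rw [gradient, LinearIsometryEquiv.norm_map]
    have hy1 : ‖y‖ ≤ ‖x‖ + 1 := by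
      have h1 : ‖y - x‖ ≤ 1 := by simpa [dist_eq_norm] using hy
      have h2 := norm_add_le x (y - x)
      rw [add_sub_cancel] at h2
      linarith
    rw [hg]
    refine (hgb y).trans (mul_le_mul_of_nonneg_left ?_ hC₀)
    calc (1 + ‖y‖ ^ 2) ^ (β / 2) ≤ 1 + ‖y‖ ^ β :=
          one_add_sq_rpow_half_le (norm_nonneg y) hβ0 (by linarith)
      _ ≤ 1 + (‖x‖ + 1) ^ β := by gcongr
      _ ≤ 1 + (‖x‖ ^ β + 1 ^ β) := by
          gcongr
          exact Real.rpow_add_le_add_rpow (norm_nonneg x) zero_le_one hβ0 hβ1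
      _ = 2 + ‖x‖ ^ β := by rw [Real.one_rpow]; ring
  have h := (convex_closedBall x 1).norm_image_sub_le_of_norm_fderiv_le
    (fun y _ => hf y) hbound (Metric.mem_closedBall_self zero_le_one)
    (by simpa [dist_eq_norm] using hz : x + z ∈ Metric.closedBall x 1)
  simpa using h

/-- Pointwise bound of the fourth power of an increment against the kernel `‖z‖^(-(α + d))`. -/
lemma sub_pow_four_mul_norm_rpow_le (hβ0 : 0 ≤ β) (hβ1 : β ≤ 1) (hC₀ : 0 ≤ C₀)
    (hf : Differentiable ℝ f)
    (hfb : ∀ x, |f x| ≤ C₀ * (1 + ‖x‖ ^ 2) ^ (β / 2))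
    (hgb : ∀ x, ‖gradient f x‖ ≤ C₀ * (1 + ‖x‖ ^ 2) ^ (β / 2)) (α δ : ℝ) (x : E) {z : E}
    (hz : z ≠ 0) :
    (f (x + z) - f x) ^ 4 * ‖z‖ ^ (-(α + δ)) ≤
      2048 * C₀ ^ 4 * (1 + ‖x‖ ^ (4 * β)) *
        (if ‖z‖ ≤ 1 then ‖z‖ ^ (4 - α - δ) else ‖z‖ ^ (4 * β - α - δ)) := by
  have hz0 : 0 < ‖z‖ := norm_pos_iff.2 hz
  have ha : 0 ≤ ‖x‖ ^ β := by positivity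
  have hfour : ∀ t : ℝ, 0 ≤ t → (t ^ β) ^ 4 = t ^ (4 * β) := by
    intro t ht
    rw [← Real.rpow_natCast, ← Real.rpow_mul ht]
    congr 1
    push_cast
    ring
  have hconst : (2 * (C₀ * (2 + ‖x‖ ^ β))) ^ 4 ≤ 2048 * C₀ ^ 4 * (1 + ‖x‖ ^ (4 * β)) := by
    have h := add_pow_le (zero_le_two (α := ℝ)) ha 4
    rw [← hfour _ (norm_nonneg x)]
    have h4 : 0 ≤ (‖x‖ ^ β) ^ 4 := by positivity
    calc (2 * (C₀ * (2 + ‖x‖ ^ β))) ^ 4 = 16 * C₀ ^ 4 * (2 + ‖x‖ ^ β) ^ 4 := by ring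
      _ ≤ 16 * C₀ ^ 4 * (128 * (1 + (‖x‖ ^ β) ^ 4)) := by
          gcongr
          norm_num at h
          linarith
      _ = 2048 * C₀ ^ 4 * (1 + (‖x‖ ^ β) ^ 4) := by ring
  have habs : (f (x + z) - f x) ^ 4 = |f (x + z) - f x| ^ 4 :=
    ((by decide : Even 4).pow_abs _).symm
  rw [habs]
  split_ifs with h1
  · have hinc : |f (x + z) - f x| ≤ 2 * (C₀ * (2 + ‖x‖ ^ β)) * ‖z‖ := by
      refine (abs_sub_le_of_norm_gradient_le hβ0 hβ1 hC₀ hf hgb x h1).trans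
        (mul_le_mul_of_nonneg_right ?_ hz0.le)
      have : 0 ≤ C₀ * (2 + ‖x‖ ^ β) := by positivity
      linarith
    calc |f (x + z) - f x| ^ 4 * ‖z‖ ^ (-(α + δ))
        ≤ (2 * (C₀ * (2 + ‖x‖ ^ β)) * ‖z‖) ^ 4 * ‖z‖ ^ (-(α + δ)) := by gcongr
      _ = (2 * (C₀ * (2 + ‖x‖ ^ β))) ^ 4 * ‖z‖ ^ (4 - α - δ) := by
          rw [mul_pow _ ‖z‖, mul_assoc, ← Real.rpow_natCast ‖z‖, ← Real.rpow_add hz0]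
          congr 2
          push_cast
          ring
      _ ≤ _ := by gcongr
  · have hinc := abs_sub_le_of_abs_le hβ0 hβ1 hC₀ hfb x (le_of_not_ge h1)
    calc |f (x + z) - f x| ^ 4 * ‖z‖ ^ (-(α + δ))
        ≤ (2 * (C₀ * (2 + ‖x‖ ^ β)) * ‖z‖ ^ β) ^ 4 * ‖z‖ ^ (-(α + δ)) := by gcongr
      _ = (2 * (C₀ * (2 + ‖x‖ ^ β))) ^ 4 * ‖z‖ ^ (4 * β - α - δ) := by
          rw [mul_pow _ (‖z‖ ^ β), mul_assoc, hfour _ hz0.le, ← Real.rpow_add hz0]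
          congr 2
          ring
      _ ≤ _ := by gcongr

end Increment

/-- Fourth-moment bound: for `α ∈ (1,2)`, `0 < β < α/4`, and `f ∈ C¹(ℝ^d)` with
`|f(x)| ≤ C₀(1+|x|²)^{β/2}` and `|∇f(x)| ≤ C₀(1+|x|²)^{β/2}`, there is `C > 0` such that
`∫_{ℝ^d∖{0}} [f(x+z) - f(x)]⁴ C_{d,α} |z|^{-(α+d)} dz ≤ C(1+|x|^{4β})` for all `x`,
the integral being finite. -/
theorem stmt13 (d : ℕ) (hd : 1 ≤ d) (α β C₀ : ℝ) (hα1 : 1 < α) (hα2 : α < 2)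
    (hβ0 : 0 < β) (hβ : β < α / 4) (hC₀ : 0 < C₀)
    (f : EuclideanSpace ℝ (Fin d) → ℝ) (hf : ContDiff ℝ 1 f)
    (hfb : ∀ x, |f x| ≤ C₀ * (1 + ‖x‖ ^ 2) ^ (β / 2))
    (hgb : ∀ x, ‖gradient f x‖ ≤ C₀ * (1 + ‖x‖ ^ 2) ^ (β / 2)) :
    ∃ C : ℝ, 0 < C ∧ ∀ x : EuclideanSpace ℝ (Fin d),
      IntegrableOn
        (fun z : EuclideanSpace ℝ (Fin d) => (f (x + z) - f x) ^ 4 *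
          ((α * (2 : ℝ) ^ (α - 1) * Real.pi ^ (-(d : ℝ) / 2) *
            Real.Gamma ((d + α) / 2) / Real.Gamma (1 - α / 2)) * ‖z‖ ^ (-(α + d))))
        {z : EuclideanSpace ℝ (Fin d) | z ≠ 0} ∧
      ∫ z in {z : EuclideanSpace ℝ (Fin d) | z ≠ 0},
          (f (x + z) - f x) ^ 4 *
            ((α * (2 : ℝ) ^ (α - 1) * Real.pi ^ (-(d : ℝ) / 2) *
              Real.Gamma ((d + α) / 2) / Real.Gamma (1 - α / 2)) * ‖z‖ ^ (-(α + d)))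
        ≤ C * (1 + ‖x‖ ^ (4 * β)) := by
  set c : ℝ := α * (2 : ℝ) ^ (α - 1) * Real.pi ^ (-(d : ℝ) / 2) *
    Real.Gamma ((d + α) / 2) / Real.Gamma (1 - α / 2) with hc
  have hc0 : 0 ≤ c := by
    have h1 : 0 < Real.Gamma ((d + α) / 2) := Real.Gamma_pos_of_pos (by positivity)
    have h2 : 0 < Real.Gamma (1 - α / 2) := Real.Gamma_pos_of_pos (by linarith)
    positivity
  let g : EuclideanSpace ℝ (Fin d) → ℝ := fun z =>
    if ‖z‖ ≤ 1 then ‖z‖ ^ (4 - α - d) else ‖z‖ ^ (4 * β - α - d)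
  have hg : Integrable g := integrable_piecewise_norm_rpow hd (by linarith) (by linarith)
  have hg0 : ∀ z, 0 ≤ g z := fun z => by
    dsimp only [g]
    split_ifs <;> positivity
  have hS : MeasurableSet {z : EuclideanSpace ℝ (Fin d) | z ≠ 0} :=
    (measurableSet_singleton 0).compl
  have hbound : ∀ x z : EuclideanSpace ℝ (Fin d), z ≠ 0 →
      (f (x + z) - f x) ^ 4 * (c * ‖z‖ ^ (-(α + d))) ≤
        c * (2048 * C₀ ^ 4 * (1 + ‖x‖ ^ (4 * β))) * g z := by
    intro x z hz
    have h := mul_le_mul_of_nonneg_left (sub_pow_four_mul_norm_rpow_le hβ0.le (by linarith)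
      hC₀.le (hf.differentiable one_ne_zero) hfb hgb α d x hz) hc0
    calc _ = c * ((f (x + z) - f x) ^ 4 * ‖z‖ ^ (-(α + d))) := by ring
      _ ≤ _ := h
      _ = _ := by ring
  have hinteg : ∀ x : EuclideanSpace ℝ (Fin d), IntegrableOn
      (fun z : EuclideanSpace ℝ (Fin d) =>
        (f (x + z) - f x) ^ 4 * (c * ‖z‖ ^ (-(α + d)))) {z | z ≠ 0} := by
    intro x
    refine ((hg.const_mul (c * (2048 * C₀ ^ 4 * (1 + ‖x‖ ^ (4 * β))))).integrableOn).mono' ?_ ?_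
    · have hfc : Measurable f := hf.continuous.measurable
      exact Measurable.aestronglyMeasurable (by fun_prop)
    · filter_upwards [ae_restrict_mem hS] with z hz
      rw [Real.norm_of_nonneg (by positivity)]
      exact hbound x z hz
  have hK : 0 ≤ ∫ z, g z := integral_nonneg hg0
  refine ⟨c * (2048 * C₀ ^ 4) * (∫ z, g z) + 1, by positivity, fun x => ⟨hinteg x, ?_⟩⟩
  have hM : 0 ≤ c * (2048 * C₀ ^ 4 * (1 + ‖x‖ ^ (4 * β))) := by positivity
  calc _ ≤ ∫ z in {z : EuclideanSpace ℝ (Fin d) | z ≠ 0},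
        c * (2048 * C₀ ^ 4 * (1 + ‖x‖ ^ (4 * β))) * g z :=
        setIntegral_mono_on (hinteg x) (hg.const_mul _).integrableOn hS (hbound x)
    _ ≤ ∫ z, c * (2048 * C₀ ^ 4 * (1 + ‖x‖ ^ (4 * β))) * g z :=
        setIntegral_le_integral (hg.const_mul _)
          (Filter.Eventually.of_forall fun z => mul_nonneg hM (hg0 z))
    _ = c * (2048 * C₀ ^ 4) * (∫ z, g z) * (1 + ‖x‖ ^ (4 * β)) := by
        rw [integral_const_mul]
        ring
    _ ≤ _ := by
        gcongr
        linarith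
end

section
/- Let d ≥ 1, α ∈ (1,2), and θ > 1 − α/2. Let f : ℝ^d → ℝ be continuously differentiable, and suppose there is a constant C₀ > 0 such that |∇f(x)| ≤ C₀ for all x ∈ ℝ^d and |f(x)| ≤ C₀(1+|x|²)^{(1−θ)/2} + C₀ for all x ∈ ℝ^d. Then there exists a constant C > 0 such that for every x ∈ ℝ^d, ∫_{ℝ^d∖{0}} [f(x+z) − f(x)]² C_{d,α} |z|^{−(α+d)} dz ≤ C ( 1 + (1+|x|²)^{1−θ} ), the integral being finite. -/
open MeasureTheory

/-- The radial weight equal to `|z|²` on the unit ball and to `|z|^{2β}` outside is integrable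
against `|z|^{-(α+d)} dz` on `ℝ^d` when `2β < α < 2`. -/
lemma integrable_radial_weight (d : ℕ) (hd : 1 ≤ d) (α β : ℝ) (hα : α < 2) (hβ : 2 * β < α) :
    Integrable (fun z : EuclideanSpace ℝ (Fin d) =>
      (if ‖z‖ < 1 then ‖z‖ ^ (2 : ℝ) else ‖z‖ ^ (2 * β)) * ‖z‖ ^ (-(α + d))) := by
  have : Nonempty (Fin d) := ⟨⟨0, hd⟩⟩
  have hrw : ∀ r ∈ Set.Ioi (0 : ℝ), ∀ p : ℝ,
      r ^ (p - α - 1) = r ^ (d - 1) * (r ^ p * r ^ (-(α + d))) := by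
    intro r hr p
    rw [← Real.rpow_natCast, ← Real.rpow_add hr, ← Real.rpow_add hr, Nat.cast_sub hd]
    congr 1
    push_cast
    ring
  rw [integrable_fun_norm_addHaar volume
    (f := fun r : ℝ => (if r < 1 then r ^ (2 : ℝ) else r ^ (2 * β)) * r ^ (-(α + d)))]
  simp only [finrank_euclideanSpace, Fintype.card_fin, smul_eq_mul]
  rw [← Set.Ioo_union_Ici_eq_Ioi one_pos, integrableOn_union]
  constructor
  · have h := (intervalIntegral.integrableOn_Ioo_rpow_iff (s := 2 - α - 1) one_pos).2 (by linarith)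
    refine h.congr_fun (fun r hr => ?_) measurableSet_Ioo
    simp only [if_pos hr.2]
    exact hrw r hr.1 2
  · have h := integrableOn_Ioi_rpow_of_lt (a := 2 * β - α - 1) (by linarith) one_pos
    rw [← integrableOn_Ici_iff_integrableOn_Ioi] at h
    refine h.congr_fun (fun r hr => ?_) measurableSet_Ici
    simp only [if_neg (not_lt.2 (Set.mem_Ici.1 hr))]
    exact hrw r (Set.mem_Ioi.2 (one_pos.trans_le (Set.mem_Ici.1 hr))) (2 * β)

/-- A function with gradient bounded by `C` is `C`-Lipschitz. -/
lemma abs_sub_le_of_norm_gradient_le_s14 {E : Type*} [NormedAddCommGroup E] [InnerProductSpace ℝ E]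
    [CompleteSpace E] {f : E → ℝ} {C : ℝ} (hf : Differentiable ℝ f)
    (hC : ∀ x, ‖gradient f x‖ ≤ C) (x z : E) : |f (x + z) - f x| ≤ C * ‖z‖ := by
  have h := convex_univ.norm_image_sub_le_of_norm_fderiv_le (𝕜 := ℝ) (f := f) (C := C)
    (fun y _ => hf y) (fun y _ => ?_) (Set.mem_univ x) (Set.mem_univ (x + z))
  · simpa using h
  · simpa [gradient] using hC y

/-- Increments of a `C`-Lipschitz function of growth `2C(1+|x|²)^{β/2}`. -/
lemma sq_sub_le_weight {E : Type*} [NormedAddCommGroup E] {f : E → ℝ} {C β : ℝ}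
    (hβ0 : 0 ≤ β) (hβ1 : β ≤ 1) (hL : ∀ x z, |f (x + z) - f x| ≤ C * ‖z‖)
    (hg : ∀ x, f x ^ 2 ≤ 4 * C ^ 2 * (1 + ‖x‖ ^ 2) ^ β) (x z : E) :
    (f (x + z) - f x) ^ 2 ≤ 80 * C ^ 2 * (1 + ‖x‖ ^ 2) ^ β *
      (if ‖z‖ < 1 then ‖z‖ ^ (2 : ℝ) else ‖z‖ ^ (2 * β)) := by
  have hx1 : 1 ≤ (1 + ‖x‖ ^ 2) ^ β := Real.one_le_rpow (by nlinarith [norm_nonneg x]) hβ0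
  split_ifs with h
  · have h1 : (f (x + z) - f x) ^ 2 ≤ C ^ 2 * ‖z‖ ^ 2 := by
      rw [← sq_abs, ← mul_pow]
      exact pow_le_pow_left₀ (abs_nonneg _) (hL x z) 2
    rw [Real.rpow_two]
    refine h1.trans (mul_le_mul_of_nonneg_right ?_ (sq_nonneg _))
    nlinarith [sq_nonneg C]
  · have hz : 1 ≤ ‖z‖ := not_lt.1 h
    have hz1 : 1 ≤ ‖z‖ ^ (2 * β) := Real.one_le_rpow hz (by linarith)
    have hxz : (1 + ‖x + z‖ ^ 2) ^ β ≤ 4 * (1 + ‖x‖ ^ 2) ^ β * ‖z‖ ^ (2 * β) := by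
      have hb : 1 + ‖x + z‖ ^ 2 ≤ 4 * (1 + ‖x‖ ^ 2) * ‖z‖ ^ 2 := by
        have h2 : ‖x + z‖ ^ 2 ≤ (‖x‖ + ‖z‖) ^ 2 :=
          pow_le_pow_left₀ (norm_nonneg _) (norm_add_le x z) 2
        have h3 : 1 ≤ ‖z‖ ^ 2 := one_le_pow₀ hz
        nlinarith [sq_nonneg (‖x‖ - ‖z‖), mul_le_mul_of_nonneg_left h3 (sq_nonneg ‖x‖)]
      calc (1 + ‖x + z‖ ^ 2) ^ β ≤ (4 * (1 + ‖x‖ ^ 2) * ‖z‖ ^ 2) ^ β :=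
            Real.rpow_le_rpow (by positivity) hb hβ0
        _ = 4 ^ β * (1 + ‖x‖ ^ 2) ^ β * ‖z‖ ^ (2 * β) := by
            rw [Real.mul_rpow (by positivity) (by positivity),
              Real.mul_rpow (by positivity) (by positivity), Real.rpow_mul (norm_nonneg z),
              Real.rpow_two]
        _ ≤ 4 * (1 + ‖x‖ ^ 2) ^ β * ‖z‖ ^ (2 * β) := by
            have : (4 : ℝ) ^ β ≤ 4 := Real.rpow_le_self_of_one_le (by norm_num) hβ1
            gcongr
    have hxx : (1 + ‖x‖ ^ 2) ^ β ≤ (1 + ‖x‖ ^ 2) ^ β * ‖z‖ ^ (2 * β) :=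
      le_mul_of_one_le_right (by linarith) hz1
    calc (f (x + z) - f x) ^ 2 ≤ 2 * f (x + z) ^ 2 + 2 * f x ^ 2 := by
          nlinarith [sq_nonneg (f (x + z) + f x)]
      _ ≤ 8 * C ^ 2 * (1 + ‖x + z‖ ^ 2) ^ β + 8 * C ^ 2 * (1 + ‖x‖ ^ 2) ^ β := by
          linarith [hg (x + z), hg x]
      _ ≤ 8 * C ^ 2 * (4 * (1 + ‖x‖ ^ 2) ^ β * ‖z‖ ^ (2 * β)) +
          8 * C ^ 2 * ((1 + ‖x‖ ^ 2) ^ β * ‖z‖ ^ (2 * β)) := by gcongr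
      _ ≤ 80 * C ^ 2 * (1 + ‖x‖ ^ 2) ^ β * ‖z‖ ^ (2 * β) := by
          have : 0 ≤ C ^ 2 * (1 + ‖x‖ ^ 2) ^ β * ‖z‖ ^ (2 * β) := by positivity
          linarith

/-- Carré-du-champ bound in the superlinear regime: for `α ∈ (1,2)`, `θ > 1 - α/2`, and
`f ∈ C¹(ℝ^d)` with `|∇f(x)| ≤ C₀` and `|f(x)| ≤ C₀(1+|x|²)^{(1-θ)/2} + C₀`, there is `C > 0`
such that `∫_{ℝ^d∖{0}} [f(x+z) - f(x)]² C_{d,α} |z|^{-(α+d)} dz ≤ C(1+(1+|x|²)^{1-θ})`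
for all `x`, the integral being finite. -/
theorem stmt14 (d : ℕ) (hd : 1 ≤ d) (α θ C₀ : ℝ) (hα1 : 1 < α) (hα2 : α < 2)
    (hθ : 1 - α / 2 < θ) (hC₀ : 0 < C₀)
    (f : EuclideanSpace ℝ (Fin d) → ℝ) (hf : ContDiff ℝ 1 f)
    (hgb : ∀ x, ‖gradient f x‖ ≤ C₀)
    (hfb : ∀ x, |f x| ≤ C₀ * (1 + ‖x‖ ^ 2) ^ ((1 - θ) / 2) + C₀) :
    ∃ C : ℝ, 0 < C ∧ ∀ x : EuclideanSpace ℝ (Fin d),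
      IntegrableOn
        (fun z : EuclideanSpace ℝ (Fin d) => (f (x + z) - f x) ^ 2 *
          ((α * (2 : ℝ) ^ (α - 1) * Real.pi ^ (-(d : ℝ) / 2) *
            Real.Gamma ((d + α) / 2) / Real.Gamma (1 - α / 2)) * ‖z‖ ^ (-(α + d))))
        {z : EuclideanSpace ℝ (Fin d) | z ≠ 0} ∧
      ∫ z in {z : EuclideanSpace ℝ (Fin d) | z ≠ 0},
          (f (x + z) - f x) ^ 2 *
            ((α * (2 : ℝ) ^ (α - 1) * Real.pi ^ (-(d : ℝ) / 2) *
              Real.Gamma ((d + α) / 2) / Real.Gamma (1 - α / 2)) * ‖z‖ ^ (-(α + d)))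
        ≤ C * (1 + (1 + ‖x‖ ^ 2) ^ (1 - θ)) := by
  have hdiff : Differentiable ℝ f := hf.differentiable one_ne_zero
  have hL := abs_sub_le_of_norm_gradient_le_s14 hdiff hgb
  set β : ℝ := max (1 - θ) 0 with hβ
  have hβ0 : 0 ≤ β := le_max_right _ _
  have hβα : 2 * β < α := by
    rcases max_cases (1 - θ) 0 with h | h <;> rw [hβ, h.1] <;> linarith
  have hβle : ∀ y : EuclideanSpace ℝ (Fin d),
      (1 + ‖y‖ ^ 2) ^ β ≤ 1 + (1 + ‖y‖ ^ 2) ^ (1 - θ) := by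
    intro y
    have hp : 0 ≤ (1 + ‖y‖ ^ 2) ^ (1 - θ) := by positivity
    rcases max_cases (1 - θ) 0 with h | h <;> rw [hβ, h.1]
    · linarith
    · rw [Real.rpow_zero]; linarith
  have hg : ∀ y, f y ^ 2 ≤ 4 * C₀ ^ 2 * (1 + ‖y‖ ^ 2) ^ β := by
    intro y
    have hy : 1 ≤ 1 + ‖y‖ ^ 2 := by nlinarith [norm_nonneg y]
    have h1 : (1 + ‖y‖ ^ 2) ^ ((1 - θ) / 2) ≤ (1 + ‖y‖ ^ 2) ^ (β / 2) :=
      Real.rpow_le_rpow_of_exponent_le hy (by linarith [le_max_left (1 - θ) 0])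
    have h2 : 1 ≤ (1 + ‖y‖ ^ 2) ^ (β / 2) := Real.one_le_rpow hy (by linarith)
    have h3 : |f y| ≤ 2 * C₀ * (1 + ‖y‖ ^ 2) ^ (β / 2) := by nlinarith [hfb y]
    have h4 : ((1 + ‖y‖ ^ 2) ^ (β / 2)) ^ 2 = (1 + ‖y‖ ^ 2) ^ β := by
      rw [← Real.rpow_natCast, ← Real.rpow_mul (by positivity)]
      congr 1
      push_cast
      ring
    calc f y ^ 2 = |f y| ^ 2 := (sq_abs _).symm
      _ ≤ (2 * C₀ * (1 + ‖y‖ ^ 2) ^ (β / 2)) ^ 2 := pow_le_pow_left₀ (abs_nonneg _) h3 2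
      _ = 4 * C₀ ^ 2 * (1 + ‖y‖ ^ 2) ^ β := by rw [mul_pow, h4]; ring
  set c : ℝ := α * (2 : ℝ) ^ (α - 1) * Real.pi ^ (-(d : ℝ) / 2) *
    Real.Gamma ((d + α) / 2) / Real.Gamma (1 - α / 2)
  have hc0 : 0 ≤ c := by
    have h1 : 0 < Real.Gamma ((d + α) / 2) := Real.Gamma_pos_of_pos (by positivity)
    have h2 : 0 < Real.Gamma (1 - α / 2) := Real.Gamma_pos_of_pos (by linarith)
    positivity
  set G : EuclideanSpace ℝ (Fin d) → ℝ := fun z =>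
    (if ‖z‖ < 1 then ‖z‖ ^ (2 : ℝ) else ‖z‖ ^ (2 * β)) * ‖z‖ ^ (-(α + d)) with hG
  have hGint : IntegrableOn G {z | z ≠ 0} :=
    (integrable_radial_weight d hd α β hα2 hβα).integrableOn
  have hG0 : 0 ≤ ∫ z in {z | z ≠ 0}, G z := by
    refine integral_nonneg fun z => ?_
    simp only [hG, Pi.zero_apply]
    split_ifs <;> positivity
  have hpt : ∀ x z, (f (x + z) - f x) ^ 2 * (c * ‖z‖ ^ (-(α + d))) ≤
      80 * C₀ ^ 2 * (1 + ‖x‖ ^ 2) ^ β * c * G z := by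
    intro x z
    have h := mul_le_mul_of_nonneg_right (sq_sub_le_weight hβ0 (by linarith) hL hg x z)
      (by positivity : 0 ≤ c * ‖z‖ ^ (-(α + d)))
    refine h.trans_eq ?_
    simp only [hG]
    ring
  refine ⟨80 * C₀ ^ 2 * c * (∫ z in {z | z ≠ 0}, G z) + 1, by positivity, fun x => ?_⟩
  have hdom : IntegrableOn (fun z => 80 * C₀ ^ 2 * (1 + ‖x‖ ^ 2) ^ β * c * G z) {z | z ≠ 0} :=
    hGint.const_mul _
  have hmeas : Measurable fun z => (f (x + z) - f x) ^ 2 * (c * ‖z‖ ^ (-(α + d))) := by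
    have := hf.continuous.measurable
    fun_prop
  have hint : IntegrableOn (fun z => (f (x + z) - f x) ^ 2 * (c * ‖z‖ ^ (-(α + d))))
      {z | z ≠ 0} := by
    refine hdom.mono' hmeas.aestronglyMeasurable (ae_of_all _ fun z => ?_)
    rw [Real.norm_of_nonneg (by positivity)]
    exact hpt x z
  refine ⟨hint, (integral_mono hint hdom (hpt x)).trans ?_⟩
  rw [integral_const_mul]
  have hp : 0 ≤ (1 + ‖x‖ ^ 2) ^ (1 - θ) := by positivity
  calc 80 * C₀ ^ 2 * (1 + ‖x‖ ^ 2) ^ β * c * (∫ z in {z | z ≠ 0}, G z)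
      = 80 * C₀ ^ 2 * c * (∫ z in {z | z ≠ 0}, G z) * (1 + ‖x‖ ^ 2) ^ β := by ring
    _ ≤ 80 * C₀ ^ 2 * c * (∫ z in {z | z ≠ 0}, G z) * (1 + (1 + ‖x‖ ^ 2) ^ (1 - θ)) :=
        mul_le_mul_of_nonneg_left (hβle x) (by positivity)
    _ ≤ _ := by linarith
end
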